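/- Suppose b < a. For every c ∈ ℝ, with t_N = ⌊(N/(2b))·(log N − c)⌋ and N = 2n, liminf_{N→∞} d_TV(U, P^{t_N}(id, ·)) ≥ d_TV(Poisson(1 + e^c/2), Poisson(1)). -/

import Mathlib

open scoped BigOperators

noncomputable section

namespace BRT

/-- The transition matrix of the biased random transposition shuffle on `𝔖_N` determined
by the set `A ⊆ [N]` (with `B = Aᶜ`) and the bias parameters `a`, `b`:
`P(x,y) = 2a²/N²` if `y x⁻¹` is a transposition of two elements of `A`, `2b²/N²` if it is a
transposition of two elements of `B`, `2ab/N²` if it transposes an element of `A` with one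
of `B`, `(a²|A| + b²|B|)/N²` if `y = x`, and `0` otherwise. -/
def transMat (a b : ℝ) {N : ℕ} (A : Finset (Fin N)) :
    Matrix (Equiv.Perm (Fin N)) (Equiv.Perm (Fin N)) ℝ :=
  fun x y =>
    if y = x then (a ^ 2 * A.card + b ^ 2 * Aᶜ.card) / (N : ℝ) ^ 2
    else if ∃ i j : Fin N, i ≠ j ∧ i ∈ A ∧ j ∈ A ∧ y * x⁻¹ = Equiv.swap i j then
      2 * a ^ 2 / (N : ℝ) ^ 2
    else if ∃ i j : Fin N, i ≠ j ∧ i ∉ A ∧ j ∉ A ∧ y * x⁻¹ = Equiv.swap i j then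
      2 * b ^ 2 / (N : ℝ) ^ 2
    else if ∃ i j : Fin N, i ∈ A ∧ j ∉ A ∧ y * x⁻¹ = Equiv.swap i j then
      2 * a * b / (N : ℝ) ^ 2
    else 0

/-- Total variation distance between two probability mass functions on a finite type. -/
def dTV {α : Type*} [Fintype α] (p q : α → ℝ) : ℝ :=
  (∑ x, |p x - q x|) / 2

/-- The uniform distribution on permutations of `Fin N`. -/
def unif (N : ℕ) : Equiv.Perm (Fin N) → ℝ :=
  fun _ => ((N.factorial : ℝ))⁻¹

/-- The probability mass function of the Poisson distribution with mean `lam`. -/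
def poissonPMF (lam : ℝ) (k : ℕ) : ℝ :=
  Real.exp (-lam) * lam ^ k / (k.factorial : ℝ)

/-- Total variation distance between two probability mass functions on `ℕ`. -/
def dTVNat (p q : ℕ → ℝ) : ℝ :=
  (∑' k : ℕ, |p k - q k|) / 2

/-!
The `k`-th factorial moment of the number of fixed points after `t` steps is the trace of `P ^ t`
acting on injective `k`-tuples of cards. The same trace on all of `[N] ^ k` is close to that of the
product kernel that moves the `k` cards independently, whose spectrum is explicit: on one card the
chain splits into constants, the difference of the two indicators, and the sum-zero functions on
`A` and on `B`. The trace over injective tuples is bounded above by perturbing the product kernel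
by a multiple `O(k² / N²)` of the identity, and below by subtracting the diagonal entries at tuples
with a repetition.

At time `t_N` only the constants and the sum-zero functions on the slower block `B` survive; the
latter contribute about `n * exp (-(2 * b / N) * t_N) → exp c / 2`. So the factorial moments tend to
`(1 + exp c / 2) ^ k`, and the number of fixed points is asymptotically Poisson with mean
`1 + exp c / 2`, against mean `1` under the uniform law. Total variation does not increase under
the map sending a permutation to its number of fixed points.
-/

open Matrix Filter Topology

section GroupWalk

variable {G Y : Type*} [Group G] [Fintype G] [MulAction G Y] [DecidableEq Y]

/-- Transition matrix of the random walk `v ↦ g • v` on a `G`-set, where the increments `g` are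
independent with law `μ`. -/
def walkMat (μ : G → ℝ) (Y : Type*) [MulAction G Y] [DecidableEq Y] : Matrix Y Y ℝ :=
  of fun v u => ∑ g, if g • v = u then μ g else 0

lemma pow_mul_eq_mul_pow {m n R : Type*} [Fintype m] [DecidableEq m] [Fintype n] [DecidableEq n]
    [CommSemiring R] {K : Matrix m m R} {O : Matrix m n R} {S : Matrix n n R}
    (h : K * O = O * S) (t : ℕ) : K ^ t * O = O * S ^ t := by
  induction t with
  | zero => simp
  | succ t ih => rw [pow_succ, Matrix.mul_assoc, h, ← Matrix.mul_assoc, ih, Matrix.mul_assoc,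
      pow_succ]

/-- Intertwines the walk on the group with the walk on the orbit of `v`. -/
def orbitMat (G : Type*) {Y : Type*} [Group G] [MulAction G Y] [DecidableEq Y] (v : Y) :
    Matrix G Y ℝ :=
  of fun x u => if x • v = u then 1 else 0

variable [DecidableEq G] [Fintype Y] (μ : G → ℝ)

lemma walkMat_mul_orbitMat (v : Y) :
    walkMat μ G * orbitMat G v = orbitMat G v * walkMat μ Y := by
  ext x u
  simp only [walkMat, orbitMat, Matrix.mul_apply, of_apply, smul_eq_mul, Finset.sum_mul]
  rw [Finset.sum_comm]
  simp only [ite_mul, zero_mul, Finset.sum_ite_eq, Finset.mem_univ, if_true]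
  simp [mul_smul]

lemma walkMat_pow_apply (t : ℕ) (v u : Y) :
    (walkMat μ Y ^ t) v u = ∑ x, if x • v = u then (walkMat μ G ^ t) 1 x else 0 := by
  have h := congrFun₂ (pow_mul_eq_mul_pow (walkMat_mul_orbitMat μ v) t) (1 : G) u
  simpa [orbitMat, Matrix.mul_apply] using h.symm

lemma trace_walkMat_pow (t : ℕ) :
    (walkMat μ Y ^ t).trace =
      ∑ x, (walkMat μ G ^ t) 1 x * (Fintype.card (MulAction.fixedBy Y x) : ℝ) := by
  simp only [trace, diag_apply, walkMat_pow_apply μ t (_ : Y)]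
  rw [Finset.sum_comm]
  refine Finset.sum_congr rfl fun x _ => ?_
  rw [← Finset.sum_filter, Finset.sum_const, nsmul_eq_mul, mul_comm]
  congr 2
  exact (Fintype.card_subtype _).symm

end GroupWalk

section FixedPoints

variable {ι V : Type*} [Fintype ι] [Fintype V] [DecidableEq V]

/-- The number of fixed points of a permutation. -/
def fixCount (g : Equiv.Perm V) : ℕ := Fintype.card (MulAction.fixedBy V g)

lemma card_fixedBy_embedding (g : Equiv.Perm V) :
    Fintype.card (MulAction.fixedBy (ι ↪ V) g) = (fixCount g).descFactorial (Fintype.card ι) := by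
  rw [fixCount, ← Fintype.card_embedding_eq]
  exact Fintype.card_congr
    { toFun := fun e => ⟨fun s => ⟨e.1 s, DFunLike.congr_fun e.2 s⟩,
        fun _ _ h => e.1.injective (congrArg Subtype.val h)⟩
      invFun := fun f => ⟨f.trans (Function.Embedding.subtype _),
        Function.Embedding.ext fun s => (f s).2⟩ }

lemma trace_walkMat_pow_embedding (μ : Equiv.Perm V → ℝ) (t : ℕ) :
    (walkMat μ (ι ↪ V) ^ t).trace = ∑ g, (walkMat μ (Equiv.Perm V) ^ t) 1 g *
      ((fixCount g).descFactorial (Fintype.card ι) : ℝ) := by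
  simp only [trace_walkMat_pow, card_fixedBy_embedding]

lemma sum_descFactorial_fixCount {k : ℕ} (hk : k ≤ Fintype.card V) :
    ∑ g : Equiv.Perm V, (fixCount g).descFactorial k = (Fintype.card V).factorial := by
  classical
  have : Nonempty (Fin k ↪ V) := Function.Embedding.nonempty_of_card_le (by simpa using hk)
  have := Equiv.Perm.isMultiplyPretransitive V k
  have horbit : Fintype.card (MulAction.orbitRel.Quotient (Equiv.Perm V) (Fin k ↪ V)) = 1 :=
    Fintype.card_eq_one_iff_nonempty_unique.2
      ((MulAction.pretransitive_iff_unique_quotient_of_nonempty _ _).1 inferInstance)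
  have hburnside := MulAction.sum_card_fixedBy_eq_card_orbits_mul_card_group
    (Equiv.Perm V) (Fin k ↪ V)
  simp only [card_fixedBy_embedding, Fintype.card_fin] at hburnside
  rw [hburnside, horbit, one_mul, Fintype.card_perm]

end FixedPoints

section NonnegMatrix

variable {X Y : Type*} [Fintype X] [Fintype Y] {M P : Matrix X X ℝ} (f : Y ↪ X)

lemma submatrix_mul_eq_add [DecidableEq X] (K L : Matrix X X ℝ) :
    (K * L).submatrix f f = K.submatrix f f * L.submatrix f f +
      of fun v u => ∑ x ∈ (Finset.univ.map f)ᶜ, K (f v) x * L x (f u) := by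
  ext v u
  simp only [submatrix_apply, Matrix.mul_apply, Matrix.add_apply, of_apply]
  rw [← Finset.sum_add_sum_compl (Finset.univ.map f), Finset.sum_map]

variable [DecidableEq X] [DecidableEq Y]

lemma pow_apply_nonneg (hM : ∀ x y, 0 ≤ M x y) (t : ℕ) (x y : X) : 0 ≤ (M ^ t) x y := by
  induction t generalizing x y with
  | zero => rw [pow_zero, one_apply]; split_ifs <;> norm_num
  | succ t ih => rw [pow_succ]; exact Finset.sum_nonneg fun z _ => mul_nonneg (ih x z) (hM z y)

lemma submatrix_pow_apply_le (hM : ∀ x y, 0 ≤ M x y) (t : ℕ) (v u : Y) :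
    (M.submatrix f f ^ t) v u ≤ (M ^ t) (f v) (f u) := by
  induction t generalizing v u with
  | zero => simp [one_apply]
  | succ t ih =>
    rw [pow_succ, pow_succ, ← submatrix_apply (M ^ t * M) f f v u, submatrix_mul_eq_add,
      Matrix.add_apply, Matrix.mul_apply, Matrix.mul_apply]
    refine le_add_of_le_of_nonneg (Finset.sum_le_sum fun w _ =>
      mul_le_mul_of_nonneg_right (ih v w) (hM _ _)) ?_
    exact Finset.sum_nonneg fun x _ => mul_nonneg (pow_apply_nonneg hM t _ _) (hM _ _)

lemma pow_apply_le_pow_apply (hM : ∀ x y, 0 ≤ M x y) (hMP : ∀ x y, M x y ≤ P x y) (t : ℕ)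
    (x y : X) : (M ^ t) x y ≤ (P ^ t) x y := by
  have hP x y : 0 ≤ P x y := (hM x y).trans (hMP x y)
  induction t generalizing x y with
  | zero => simp
  | succ t ih =>
    rw [pow_succ, pow_succ, Matrix.mul_apply, Matrix.mul_apply]
    exact Finset.sum_le_sum fun z _ =>
      mul_le_mul (ih x z) (hMP z y) (hM z y) (pow_apply_nonneg hP t x z)

lemma trace_pow_le_trace_pow_of_le_submatrix {K : Matrix Y Y ℝ} (hK : ∀ v u, 0 ≤ K v u)
    (hM : ∀ x y, 0 ≤ M x y) (hKM : ∀ v u, K v u ≤ M (f v) (f u)) (t : ℕ) :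
    (K ^ t).trace ≤ (M ^ t).trace :=
  calc ∑ v, (K ^ t) v v
      ≤ ∑ v, (M ^ t) (f v) (f v) := Finset.sum_le_sum fun v _ =>
        (pow_apply_le_pow_apply hK hKM t v v).trans (submatrix_pow_apply_le f hM t v v)
    _ = ∑ x ∈ Finset.univ.map f, (M ^ t) x x :=
        (Finset.sum_map Finset.univ f fun x => (M ^ t) x x).symm
    _ ≤ ∑ x, (M ^ t) x x := Finset.sum_le_univ_sum_of_nonneg fun x => pow_apply_nonneg hM t x x

/-- The weight of closed paths of length `s + 1` that start outside `Y ⊆ X` and enter `Y` at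
once. -/
def returnWeight (M : Matrix X X ℝ) (f : Y ↪ X) (s : ℕ) : ℝ :=
  ∑ x ∈ (Finset.univ.map f)ᶜ, ∑ u, M x (f u) * (M ^ s) (f u) x

lemma trace_submatrix_pow_mul_le (hM : ∀ x y, 0 ≤ M x y) (r j : ℕ) :
    ((M ^ (r + 1)).submatrix f f * M.submatrix f f ^ j).trace ≤
      ((M ^ r).submatrix f f * M.submatrix f f ^ (j + 1)).trace + returnWeight M f (j + r) := by
  set B := M.submatrix f f
  have hpow := pow_apply_nonneg hM
  have hsplit : ((M ^ (r + 1)).submatrix f f * B ^ j).trace =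
      ((M ^ r).submatrix f f * B ^ (j + 1)).trace +
        ∑ v, ∑ u, (∑ x ∈ (Finset.univ.map f)ᶜ, (M ^ r) (f v) x * M x (f u)) * (B ^ j) u v := by
    rw [pow_succ, submatrix_mul_eq_add, add_mul, trace_add, Matrix.mul_assoc, ← pow_succ']
    rfl
  rw [hsplit, returnWeight]
  gcongr
  calc ∑ v, ∑ u, (∑ x ∈ (Finset.univ.map f)ᶜ, (M ^ r) (f v) x * M x (f u)) * (B ^ j) u v
      ≤ ∑ v, ∑ u, (∑ x ∈ (Finset.univ.map f)ᶜ, (M ^ r) (f v) x * M x (f u)) *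
          (M ^ j) (f u) (f v) := by
        gcongr with v _ u _
        · exact Finset.sum_nonneg fun x _ => mul_nonneg (hpow r _ _) (hM _ _)
        · exact submatrix_pow_apply_le f hM j u v
    _ = ∑ x ∈ (Finset.univ.map f)ᶜ, ∑ u, M x (f u) *
          ∑ y ∈ Finset.univ.map f, (M ^ j) (f u) y * (M ^ r) y x := by
        simp only [Finset.sum_mul, Finset.mul_sum, Finset.sum_map]
        rw [Finset.sum_comm, Finset.sum_congr rfl fun u _ => Finset.sum_comm, Finset.sum_comm]
        exact Finset.sum_congr rfl fun x _ => Finset.sum_congr rfl fun u _ =>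
          Finset.sum_congr rfl fun v _ => by ring
    _ ≤ ∑ x ∈ (Finset.univ.map f)ᶜ, ∑ u, M x (f u) * (M ^ (j + r)) (f u) x := by
        gcongr with x _ u _
        · exact hM _ _
        · rw [pow_add, Matrix.mul_apply]
          exact Finset.sum_le_univ_sum_of_nonneg fun y => mul_nonneg (hpow _ _ _) (hpow _ _ _)

/-- Closed paths of length `t` in `X` based in `Y` either stay in `Y` or leave it for the last
time at one of `t` instants. -/
lemma trace_submatrix_pow_le (hM : ∀ x y, 0 ≤ M x y) (t : ℕ) :
    ((M ^ t).submatrix f f).trace ≤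
      (M.submatrix f f ^ t).trace + t * returnWeight M f (t - 1) := by
  have key : ∀ j r, ((M ^ (r + j)).submatrix f f).trace ≤
      ((M ^ r).submatrix f f * M.submatrix f f ^ j).trace +
        j * returnWeight M f (r + j - 1) := by
    intro j
    induction j with
    | zero => simp
    | succ j ih =>
      intro r
      have hstep := trace_submatrix_pow_mul_le f hM r j
      have hih := ih (r + 1)
      rw [show r + 1 + j = r + (j + 1) by ring] at hih
      rw [show j + r = r + (j + 1) - 1 by lia] at hstep
      push_cast
      linarith
  simpa using key t 0

end NonnegMatrix

section PosSemidef

lemma abs_apply_le_of_posSemidef {X : Type*} {S : Matrix X X ℝ} (hS : S.PosSemidef) (x y : X) :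
    |S x y| ≤ (S x x + S y y) / 2 := by
  have hsymm : S y x = S x y := by simpa using hS.isHermitian.apply x y
  have hform (r : ℝ) : 0 ≤ S x x + 2 * r * S x y + r ^ 2 * S y y := by
    have h := (hS.submatrix ![x, y]).dotProduct_mulVec_nonneg ![1, r]
    simp only [dotProduct, mulVec, Pi.star_apply, star_trivial, submatrix_apply, Fin.sum_univ_two,
      cons_val_zero, cons_val_one, mul_one, one_mul, hsymm] at h
    linarith
  exact abs_le.2 ⟨by linarith [hform 1], by linarith [hform (-1)]⟩

variable {X K : Type*} [Fintype X] [DecidableEq X] {M S Q : Matrix X X ℝ}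

lemma posSemidef_of_diagonally_dominant (hM : M.IsHermitian)
    (hdom : ∀ x, ∑ y ∈ Finset.univ.erase x, ‖M x y‖ ≤ M x x) : M.PosSemidef := by
  rw [hM.posSemidef_iff_eigenvalues_nonneg]
  intro i
  have heig : Module.End.HasEigenvalue (toLin' M) (hM.eigenvalues i) := by
    rw [Module.End.hasEigenvalue_iff_mem_spectrum, spectrum_toLin']
    exact hM.eigenvalues_mem_spectrum_real i
  obtain ⟨x, hx⟩ := eigenvalue_mem_ball heig
  rw [Metric.mem_closedBall, Real.dist_eq] at hx
  rw [Pi.zero_apply]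
  linarith [(abs_le.1 hx).1, hdom x]

lemma trace_mul_permMatrix_le (hS : S.PosSemidef) (σ : Equiv.Perm X) :
    (S * σ.permMatrix ℝ).trace ≤ S.trace := by
  calc (S * σ.permMatrix ℝ).trace
      = ∑ x, S x (σ.symm x) := by
        simp [trace, Equiv.Perm.permMatrix, PEquiv.mul_toMatrix_toPEquiv]
    _ ≤ ∑ x, (S x x + S (σ.symm x) (σ.symm x)) / 2 := Finset.sum_le_sum fun x _ =>
        (le_abs_self _).trans (abs_apply_le_of_posSemidef hS x _)
    _ = S.trace := by
        rw [← Finset.sum_div, Finset.sum_add_distrib, σ.symm.sum_comp fun x => S x x]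
        simp [trace]

variable [Fintype K] (τ : K → Equiv.Perm X)

lemma trace_mul_pow_sum_permMatrix_le (hS : S.PosSemidef) (t : ℕ) :
    (S * (∑ κ, (τ κ).permMatrix ℝ) ^ t).trace ≤ (Fintype.card K : ℝ) ^ t * S.trace := by
  suffices h : ∀ σ : Equiv.Perm X, (S * (∑ κ, (τ κ).permMatrix ℝ) ^ t * σ.permMatrix ℝ).trace ≤
      (Fintype.card K : ℝ) ^ t * S.trace by
    simpa using h 1
  induction t with
  | zero => simpa using trace_mul_permMatrix_le hS
  | succ t ih =>
    intro σ
    calc (S * (∑ κ, (τ κ).permMatrix ℝ) ^ (t + 1) * σ.permMatrix ℝ).trace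
        = ∑ κ, (S * (∑ κ, (τ κ).permMatrix ℝ) ^ t * (σ * τ κ).permMatrix ℝ).trace := by
          simp only [pow_succ, permMatrix_mul, ← Matrix.mul_assoc, ← trace_sum, ← Finset.sum_mul,
            Finset.mul_sum]
      _ ≤ ∑ _κ : K, (Fintype.card K : ℝ) ^ t * S.trace := Finset.sum_le_sum fun κ _ => ih _
      _ = (Fintype.card K : ℝ) ^ (t + 1) * S.trace := by
          rw [Finset.sum_const, nsmul_eq_mul, Finset.card_univ, pow_succ]; ring

lemma trace_add_smul_sum_permMatrix_pow_le (hQ : Q.PosSemidef)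
    (hcomm : ∀ κ, Commute Q ((τ κ).permMatrix ℝ)) {ε : ℝ} (hε : 0 ≤ ε) (t : ℕ) :
    ((Q + ε • ∑ κ, (τ κ).permMatrix ℝ) ^ t).trace ≤
      ((Q + (ε * Fintype.card K) • 1) ^ t).trace := by
  have hQZ : Commute Q (ε • ∑ κ, (τ κ).permMatrix ℝ) :=
    (Commute.sum_right _ _ _ fun κ _ => hcomm κ).smul_right ε
  have hQ1 : Commute Q ((ε * Fintype.card K : ℝ) • (1 : Matrix X X ℝ)) :=
    (Commute.one_right Q).smul_right _
  rw [hQZ.add_pow', hQ1.add_pow', trace_sum, trace_sum]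
  refine Finset.sum_le_sum fun m _ => ?_
  rw [trace_smul, trace_smul, smul_pow, smul_pow, one_pow, Matrix.mul_smul, Matrix.mul_smul,
    Matrix.mul_one, trace_smul, trace_smul, mul_pow, smul_eq_mul, smul_eq_mul, mul_assoc]
  gcongr
  exact trace_mul_pow_sum_permMatrix_le τ (hQ.pow m.1) m.2

end PosSemidef

section PiKronecker

variable {ι V : Type*} [Fintype ι]

/-- The Kronecker product of a family of matrices, acting on functions of `ι → V`. -/
def piKronecker (M : ι → Matrix V V ℝ) : Matrix (ι → V) (ι → V) ℝ :=
  of fun v u => ∏ s, M s (v s) (u s)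

lemma isHermitian_piKronecker {M : ι → Matrix V V ℝ} (hM : ∀ s, (M s).IsHermitian) :
    (piKronecker M).IsHermitian :=
  IsHermitian.ext fun v u => Finset.prod_congr rfl fun s _ => (hM s).apply (v s) (u s)

lemma piKronecker_one [DecidableEq V] : piKronecker (1 : ι → Matrix V V ℝ) = 1 := by
  ext v u
  simp [piKronecker, one_apply, Finset.prod_ite_zero, funext_iff]

variable [DecidableEq ι]

lemma piKronecker_mul [Fintype V] (M L : ι → Matrix V V ℝ) :
    piKronecker M * piKronecker L = piKronecker fun s => M s * L s := by
  ext v u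
  simp only [piKronecker, Matrix.mul_apply, of_apply, ← Finset.prod_mul_distrib,
    Finset.prod_univ_sum, Fintype.piFinset_univ]

lemma trace_piKronecker [Fintype V] (M : ι → Matrix V V ℝ) :
    (piKronecker M).trace = ∏ s, (M s).trace := by
  simp only [trace, diag_apply, piKronecker, of_apply, Finset.prod_univ_sum,
    Fintype.piFinset_univ]

lemma sum_piKronecker {m : Type*} [Fintype m] (E : m → Matrix V V ℝ) :
    ∑ α : ι → m, piKronecker (fun s => E (α s)) = piKronecker fun _ => ∑ α, E α := by
  ext v u
  simp only [piKronecker, Matrix.sum_apply, of_apply, Finset.prod_univ_sum, Fintype.piFinset_univ]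

/-- The matrix `L` acting on the coordinate `s`. -/
def coordMat [DecidableEq V] (s : ι) (L : Matrix V V ℝ) : Matrix (ι → V) (ι → V) ℝ :=
  piKronecker (Function.update 1 s L)

variable [DecidableEq V] (L : Matrix V V ℝ)

lemma coordMat_apply (s : ι) (v u : ι → V) :
    coordMat s L v u = if Function.update v s (u s) = u then L (v s) (u s) else 0 := by
  have hcond : Function.update v s (u s) = u ↔ ∀ r ∈ Finset.univ.erase s, v r = u r := by
    simp [Function.update_eq_iff]
  simp only [hcond, coordMat, piKronecker, of_apply]
  rw [← Finset.mul_prod_erase _ _ (Finset.mem_univ s), Function.update_self,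
    Finset.prod_congr rfl fun r hr => by
      rw [Function.update_of_ne (Finset.ne_of_mem_erase hr), Pi.one_apply, one_apply],
    Finset.prod_ite_zero]
  simp

lemma isHermitian_coordMat (hL : L.IsHermitian) (s : ι) : (coordMat s L).IsHermitian := by
  refine isHermitian_piKronecker fun r => ?_
  obtain rfl | hr := eq_or_ne r s
  · rwa [Function.update_self]
  · rw [Function.update_of_ne hr]
    exact isHermitian_one

lemma coordMat_comp_perm (σ : Equiv.Perm ι) (s : ι) (v u : ι → V) :
    coordMat s L (v ∘ σ) (u ∘ σ) = coordMat (σ s) L v u := by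
  simp only [coordMat, piKronecker, of_apply]
  refine Fintype.prod_equiv σ _ _ fun r => ?_
  by_cases hr : r = s
  · subst hr; simp
  · simp [hr]

lemma coordMat_mul_piKronecker [Fintype V] {M : ι → Matrix V V ℝ} {s : ι} {θ : ℝ}
    (h : L * M s = θ • M s) : coordMat s L * piKronecker M = θ • piKronecker M := by
  rw [coordMat, piKronecker_mul]
  ext v u
  simp only [piKronecker, of_apply, Matrix.smul_apply, smul_eq_mul]
  rw [← Finset.mul_prod_erase _ _ (Finset.mem_univ s),
    ← Finset.mul_prod_erase _ (fun r => M r (v r) (u r)) (Finset.mem_univ s),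
    Function.update_self, h, Matrix.smul_apply, smul_eq_mul, mul_assoc]
  refine congrArg _ (congrArg _ (Finset.prod_congr rfl fun r hr => ?_))
  rw [Function.update_of_ne (Finset.ne_of_mem_erase hr), Pi.one_apply, Matrix.one_mul]

end PiKronecker

section SpectralResolution

variable {X m : Type*} [Fintype X] [DecidableEq X] [Fintype m]

/-- A decomposition of the identity into matrices whose columns are eigenvectors of `M`. The
matrices `proj α` are not required to be idempotent. -/
structure SpectralResolution (M : Matrix X X ℝ) (m : Type*) [Fintype m] where
  proj : m → Matrix X X ℝ
  eig : m → ℝ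
  sum_proj : ∑ α, proj α = 1
  mul_proj : ∀ α, M * proj α = eig α • proj α

namespace SpectralResolution

variable {M : Matrix X X ℝ} (R : SpectralResolution M m)

lemma pow_eq_sum (t : ℕ) : M ^ t = ∑ α, R.eig α ^ t • R.proj α := by
  have h (α : m) : M ^ t * R.proj α = R.eig α ^ t • R.proj α := by
    induction t with
    | zero => simp
    | succ t ih =>
      rw [pow_succ, Matrix.mul_assoc, R.mul_proj, Matrix.mul_smul, ih, smul_smul, pow_succ']
  rw [← Matrix.mul_one (M ^ t), ← R.sum_proj, Finset.mul_sum]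
  exact Finset.sum_congr rfl fun α _ => h α

lemma trace_pow (t : ℕ) : (M ^ t).trace = ∑ α, R.eig α ^ t * (R.proj α).trace := by
  simp only [R.pow_eq_sum, trace_sum, trace_smul, smul_eq_mul]

/-- Adding a multiple of the identity shifts the eigenvalues. -/
@[simps] def addSmulOne (c : ℝ) : SpectralResolution (M + c • 1) m where
  proj := R.proj
  eig α := R.eig α + c
  sum_proj := R.sum_proj
  mul_proj α := by rw [add_mul, R.mul_proj, smul_mul_assoc, one_mul, add_smul]

end SpectralResolution

end SpectralResolution

section ProdKernel

lemma half_le_one_sub_sum {ι m : Type*} [Fintype ι] {θ : m → ℝ} {q : ℝ} (hθ : ∀ i, θ i ≤ 2 * q)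
    (hsmall : 4 * q * Fintype.card ι ≤ 1) (α : ι → m) : 1 / 2 ≤ 1 - ∑ s, θ (α s) := by
  have h : ∑ s, θ (α s) ≤ ∑ _s : ι, 2 * q := Finset.sum_le_sum fun s _ => hθ (α s)
  rw [Finset.sum_const, Finset.card_univ, nsmul_eq_mul] at h
  linarith

variable {ι V m : Type*} [Fintype ι] [DecidableEq ι] [DecidableEq V] [Fintype m] {p : V → ℝ}

/-- Minus the generator of the chain on `V` that at rate `2 p i` leaves `i` for a point of law
`p`. -/
def laplacian (p : V → ℝ) : Matrix V V ℝ := (2 : ℝ) • (diagonal p - vecMulVec p p)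

/-- The kernel on tuples that follows the cards `v s` as if they moved independently of each other:
the card at `v s` goes to `j` with probability `2 p (v s) p j`. -/
def prodKernel (ι : Type*) [Fintype ι] [DecidableEq ι] (p : V → ℝ) : Matrix (ι → V) (ι → V) ℝ :=
  1 - ∑ s, coordMat s (laplacian p)

lemma laplacian_isHermitian (p : V → ℝ) : (laplacian p).IsHermitian := by
  refine IsHermitian.ext fun i j => ?_
  obtain rfl | hij := eq_or_ne i j
  · rfl
  · simp [laplacian, vecMulVec_apply, hij, hij.symm, mul_comm]

lemma isHermitian_prodKernel : (prodKernel ι p).IsHermitian :=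
  isHermitian_one.sub
    (isSelfAdjoint_sum _ fun s _ => isHermitian_coordMat _ (laplacian_isHermitian p) s)

lemma prodKernel_comp_perm (σ : Equiv.Perm ι) (v u : ι → V) :
    prodKernel ι p (v ∘ σ) (u ∘ σ) = prodKernel ι p v u := by
  simp only [prodKernel, Matrix.sub_apply, Matrix.sum_apply, coordMat_comp_perm, one_apply,
    σ.surjective.right_cancellable]
  rw [Equiv.sum_comp σ fun s => coordMat s (laplacian p) v u]

/-- The permutation of tuples induced by a permutation of the coordinates. -/
def coordPerm (V : Type*) (σ : Equiv.Perm ι) : Equiv.Perm (ι → V) :=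
  σ.symm.arrowCongr (Equiv.refl V)

lemma coordMat_laplacian_apply (s : ι) (v u : ι → V) :
    coordMat s (laplacian p) v u = (if v = u then 2 * p (v s) else 0) -
      if Function.update v s (u s) = u then 2 * p (v s) * p (u s) else 0 := by
  rw [coordMat_apply]
  simp only [laplacian, Matrix.smul_apply, Matrix.sub_apply, diagonal_apply, vecMulVec_apply,
    smul_eq_mul]
  obtain hs | hs := eq_or_ne (v s) (u s)
  · rw [← hs, Function.update_eq_self, if_pos rfl]
    split_ifs <;> ring
  · rw [if_neg hs, if_neg fun h : v = u => hs (congrFun h s)]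
    split_ifs <;> ring

lemma prodKernel_apply (v u : ι → V) :
    prodKernel ι p v u = (if v = u then 1 - ∑ s, 2 * p (v s) else 0) +
      ∑ s, if Function.update v s (u s) = u then 2 * p (v s) * p (u s) else 0 := by
  simp only [prodKernel, Matrix.sub_apply, Matrix.sum_apply, coordMat_laplacian_apply, one_apply,
    Finset.sum_sub_distrib]
  split_ifs
  · ring
  · simp

lemma ite_le_prodKernel_apply (hp0 : ∀ i, 0 ≤ p i) (v u : ι → V) :
    (if v = u then 1 - ∑ s, 2 * p (v s) else 0) ≤ prodKernel ι p v u := by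
  rw [prodKernel_apply]
  refine le_add_of_nonneg_right (Finset.sum_nonneg fun s _ => ?_)
  have := hp0 (v s)
  have := hp0 (u s)
  split_ifs <;> positivity

lemma half_le_prodKernel_apply_self {q : ℝ} (hp0 : ∀ i, 0 ≤ p i) (hpq : ∀ i, p i ≤ q)
    (hsmall : 4 * q * Fintype.card ι ≤ 1) (v : ι → V) : 1 / 2 ≤ prodKernel ι p v v := by
  have h := half_le_one_sub_sum (θ := fun i => 2 * p i) (fun i => by linarith [hpq i]) hsmall v
  have hdiag := ite_le_prodKernel_apply hp0 v v
  rw [if_pos rfl] at hdiag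
  exact h.trans hdiag

lemma prodKernel_nonneg {q : ℝ} (hp0 : ∀ i, 0 ≤ p i) (hpq : ∀ i, p i ≤ q)
    (hsmall : 4 * q * Fintype.card ι ≤ 1) (v u : ι → V) : 0 ≤ prodKernel ι p v u := by
  obtain rfl | hvu := eq_or_ne v u
  · linarith [half_le_prodKernel_apply_self hp0 hpq hsmall v]
  · simpa [hvu] using ite_le_prodKernel_apply hp0 v u

variable [Fintype V]

lemma commute_prodKernel_permMatrix (σ : Equiv.Perm ι) :
    Commute (prodKernel ι p) ((coordPerm V σ).permMatrix ℝ) := by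
  rw [commute_iff_eq, Equiv.Perm.permMatrix, PEquiv.toMatrix_toPEquiv_mul,
    PEquiv.mul_toMatrix_toPEquiv]
  ext v u
  have h := (prodKernel_comp_perm (p := p) σ v (u ∘ σ.symm)).symm
  rw [Function.comp_assoc, Equiv.symm_comp_self, Function.comp_id] at h
  exact h

lemma sum_ite_update_eq (s : ι) (v u : ι → V) (w : V → ℝ) :
    ∑ j, (if Function.update v s j = u then w j else 0) =
      if Function.update v s (u s) = u then w (u s) else 0 := by
  refine Fintype.sum_eq_single (u s) fun j hj => if_neg fun h => hj ?_
  rw [← h, Function.update_self]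

lemma prodKernel_apply_eq_sum (v u : ι → V) :
    prodKernel ι p v u = (if v = u then 1 - ∑ s, 2 * p (v s) else 0) +
      ∑ s, ∑ j, if Function.update v s j = u then 2 * p (v s) * p j else 0 := by
  simp only [prodKernel_apply, sum_ite_update_eq]

lemma sum_prodKernel_apply (hp : ∑ i, p i = 1) (v : ι → V) : ∑ u, prodKernel ι p v u = 1 := by
  simp only [prodKernel_apply_eq_sum, Finset.sum_add_distrib]
  rw [Finset.sum_comm (s := Finset.univ (α := ι → V)),
    Finset.sum_congr rfl fun s _ => Finset.sum_comm]
  simp [← Finset.mul_sum, hp]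

lemma sum_erase_prodKernel_le (hp0 : ∀ i, 0 ≤ p i) (hp : ∑ i, p i = 1) (v : ι → V) :
    ∑ u ∈ Finset.univ.erase v, prodKernel ι p v u ≤ ∑ s, 2 * p (v s) := by
  have hdiag := ite_le_prodKernel_apply hp0 v v
  have hrow := Finset.add_sum_erase Finset.univ (prodKernel ι p v) (Finset.mem_univ v)
  rw [sum_prodKernel_apply hp] at hrow
  rw [if_pos rfl] at hdiag
  linarith

lemma posSemidef_prodKernel {q : ℝ} (hp0 : ∀ i, 0 ≤ p i) (hpq : ∀ i, p i ≤ q)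
    (hp : ∑ i, p i = 1) (hsmall : 4 * q * Fintype.card ι ≤ 1) :
    (prodKernel ι p).PosSemidef := by
  refine posSemidef_of_diagonally_dominant isHermitian_prodKernel fun v => ?_
  simp only [Real.norm_eq_abs, abs_of_nonneg (prodKernel_nonneg hp0 hpq hsmall v _)]
  have hsum := sum_erase_prodKernel_le hp0 hp v
  have hhalf := half_le_one_sub_sum (θ := fun i => 2 * p i) (fun i => by linarith [hpq i]) hsmall v
  linarith [half_le_prodKernel_apply_self hp0 hpq hsmall v]

/-- The spectral resolution of the product kernel given by products of one-card modes. -/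
@[simps] def SpectralResolution.prodKernel (R : SpectralResolution (laplacian p) m) :
    SpectralResolution (BRT.prodKernel ι p) (ι → m) where
  proj α := piKronecker fun s => R.proj (α s)
  eig α := 1 - ∑ s, R.eig (α s)
  sum_proj := by rw [sum_piKronecker, R.sum_proj]; exact piKronecker_one
  mul_proj α := by
    rw [BRT.prodKernel, sub_mul, one_mul, Finset.sum_mul, sub_smul, one_smul, Finset.sum_smul]
    exact congrArg _ (Finset.sum_congr rfl fun s _ =>
      coordMat_mul_piKronecker _ (R.mul_proj (α s)))

end ProdKernel

section SwapWalk

lemma update_apply_eq_embedding_iff {ι V : Type*} [DecidableEq ι] (v u : ι ↪ V) (s r : ι) :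
    Function.update v s (v r) = u ↔ s = r ∧ v = u := by
  refine ⟨fun h => ?_, ?_⟩
  · have hsr : s = r := by
      by_contra hne
      refine hne (u.injective ?_)
      rw [← h, Function.update_self, Function.update_of_ne (Ne.symm hne)]
    subst hsr
    exact ⟨rfl, DFunLike.coe_injective (by simpa using h)⟩
  · rintro ⟨rfl, rfl⟩
    exact Function.update_eq_self s v

variable {ι V : Type*} [Fintype ι] [DecidableEq V]

/-- The law of the transposition `swap i j` where `i` and `j` are independent of law `p`. -/
def swapLaw [Fintype V] (p : V → ℝ) (g : Equiv.Perm V) : ℝ :=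
  ∑ i, ∑ j, if Equiv.swap i j = g then p i * p j else 0

lemma walkMat_swapLaw_apply [Fintype V] {Y : Type*} [MulAction (Equiv.Perm V) Y] [DecidableEq Y]
    (p : V → ℝ) (v u : Y) : walkMat (swapLaw p) Y v u =
      ∑ i, ∑ j, p i * p j * if Equiv.swap i j • v = u then 1 else 0 := by
  have hterm (g : Equiv.Perm V) : (if g • v = u then swapLaw p g else 0) =
      ∑ i, ∑ j, if Equiv.swap i j = g then if g • v = u then p i * p j else 0 else 0 := by
    simp only [swapLaw]
    split_ifs <;> simp
  simp only [walkMat, of_apply, hterm]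
  rw [Finset.sum_comm, Finset.sum_congr rfl fun i _ => Finset.sum_comm]
  simp

/-- The inclusion of injective tuples in tuples. -/
def tupleEmb (ι V : Type*) : (ι ↪ V) ↪ (ι → V) := ⟨DFunLike.coe, DFunLike.coe_injective⟩

lemma swap_smul_eq_update [DecidableEq ι] (v : ι ↪ V) {s : ι} {j : V}
    (hj : j ∉ Finset.univ.map v) :
    ⇑(Equiv.swap (v s) j • v) = Function.update v s j := by
  ext r
  rw [Function.Embedding.smul_apply, Equiv.Perm.smul_def]
  obtain rfl | hr := eq_or_ne r s
  · simp
  · rw [Function.update_of_ne hr]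
    exact Equiv.swap_apply_of_ne_of_ne (v.injective.ne hr) fun h => hj (by simp [← h])

lemma swap_smul_eq_self (v : ι ↪ V) {i j : V} (hi : i ∉ Finset.univ.map v)
    (hj : j ∉ Finset.univ.map v) : Equiv.swap i j • v = v := by
  ext r
  rw [Function.Embedding.smul_apply, Equiv.Perm.smul_def]
  exact Equiv.swap_apply_of_ne_of_ne (fun h => hi (by simp [← h])) fun h => hj (by simp [← h])

variable [Fintype V] {p : V → ℝ}

lemma sum_eq_sum_add_sum_compl (v : ι ↪ V) (g : V → ℝ) :
    ∑ i, g i = ∑ s, g (v s) + ∑ i ∈ (Finset.univ.map v)ᶜ, g i := by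
  rw [← Finset.sum_add_sum_compl (Finset.univ.map v), Finset.sum_map]

/-- The weight of the moves of one card of the tuple `v` to a place outside `v` that result in
`u`. -/
def moveWeight (p : V → ℝ) (v u : ι ↪ V) : ℝ :=
  ∑ s, ∑ j ∈ (Finset.univ.map v)ᶜ, p (v s) * p j * if Equiv.swap (v s) j • v = u then 1 else 0

lemma walkMat_swapLaw_embedding_apply (hp : ∑ i, p i = 1) (v u : ι ↪ V) :
    walkMat (swapLaw p) (ι ↪ V) v u =
      (∑ s, ∑ r, p (v s) * p (v r) * if Equiv.swap (v s) (v r) • v = u then 1 else 0) +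
        2 * moveWeight p v u + (1 - ∑ s, p (v s)) ^ 2 * if v = u then 1 else 0 := by
  have hcompl : ∑ i ∈ (Finset.univ.map v)ᶜ, p i = 1 - ∑ s, p (v s) := by
    rw [← hp, sum_eq_sum_add_sum_compl v p, add_sub_cancel_left]
  have hmove : ∑ i ∈ (Finset.univ.map v)ᶜ, ∑ s,
      (p i * p (v s) * if Equiv.swap i (v s) • v = u then 1 else 0) = moveWeight p v u := by
    rw [Finset.sum_comm]
    simp only [moveWeight, Equiv.swap_comm, mul_comm]
  have hself : ∑ i ∈ (Finset.univ.map v)ᶜ, ∑ j ∈ (Finset.univ.map v)ᶜ,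
      (p i * p j * if Equiv.swap i j • v = u then 1 else 0) =
        (1 - ∑ s, p (v s)) ^ 2 * if v = u then 1 else 0 := by
    rw [← hcompl, sq, Finset.sum_mul_sum, Finset.sum_mul]
    refine Finset.sum_congr rfl fun i hi => ?_
    rw [Finset.sum_mul]
    exact Finset.sum_congr rfl fun j hj => by
      rw [swap_smul_eq_self v (Finset.mem_compl.1 hi) (Finset.mem_compl.1 hj)]
  simp only [walkMat_swapLaw_apply, sum_eq_sum_add_sum_compl v, Finset.sum_add_distrib, hmove,
    hself]
  rw [← moveWeight]
  ring

variable [DecidableEq ι]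

lemma prodKernel_embedding_apply (v u : ι ↪ V) :
    prodKernel ι p v u = (1 - 2 * ∑ s, p (v s)) * (if v = u then 1 else 0) +
      (∑ s, ∑ r, 2 * p (v s) * p (v r) * if s = r ∧ v = u then 1 else 0) +
        2 * moveWeight p v u := by
  have hmove : ∑ s, ∑ j ∈ (Finset.univ.map v)ᶜ,
      (if Function.update v s j = u then 2 * p (v s) * p j else 0) = 2 * moveWeight p v u := by
    simp only [moveWeight, Finset.mul_sum]
    refine Finset.sum_congr rfl fun s _ => Finset.sum_congr rfl fun j hj => ?_
    simp only [← swap_smul_eq_update v (Finset.mem_compl.1 hj), DFunLike.coe_fn_eq, mul_ite,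
      mul_one, mul_zero, mul_assoc]
  simp only [prodKernel_apply_eq_sum, sum_eq_sum_add_sum_compl v, Finset.sum_add_distrib, hmove,
    update_apply_eq_embedding_iff, DFunLike.coe_fn_eq, mul_ite, mul_one, mul_zero, ← Finset.mul_sum]
  ring

/-- Transpositions of two cards of the tuple are the only difference between the walk on injective
tuples and the product kernel. -/
lemma walkMat_swapLaw_eq_prodKernel_add (hp : ∑ i, p i = 1) (v u : ι ↪ V) :
    walkMat (swapLaw p) (ι ↪ V) v u = prodKernel ι p v u +
      ∑ s, ∑ r, if s = r then 0 else p (v s) * p (v r) *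
        ((if v = u then 1 else 0) + if Equiv.swap (v s) (v r) • v = u then 1 else 0) := by
  have hpair (s r : ι) :
      p (v s) * p (v r) * (if Equiv.swap (v s) (v r) • v = u then 1 else 0) +
        p (v s) * p (v r) * (if v = u then 1 else 0) =
      2 * p (v s) * p (v r) * (if s = r ∧ v = u then 1 else 0) +
        if s = r then 0 else p (v s) * p (v r) *
          ((if v = u then 1 else 0) + if Equiv.swap (v s) (v r) • v = u then 1 else 0) := by
    obtain rfl | hsr := eq_or_ne s r
    · simp only [Equiv.swap_self, ← Equiv.Perm.one_def, one_smul, true_and, if_true, add_zero]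
      ring
    · simp only [hsr, false_and, if_false]
      ring
  have hsum := Finset.sum_congr rfl fun s (_ : s ∈ Finset.univ) =>
    Finset.sum_congr rfl fun r (_ : r ∈ Finset.univ) => hpair s r
  have hsq : (∑ s, p (v s)) ^ 2 * (if v = u then 1 else 0) =
      ∑ s, ∑ r, p (v s) * p (v r) * (if v = u then 1 else 0) := by
    rw [sq, Finset.sum_mul_sum]
    simp only [Finset.sum_mul]
  simp only [Finset.sum_add_distrib, ← hsq] at hsum
  rw [walkMat_swapLaw_embedding_apply hp, prodKernel_embedding_apply]
  linear_combination hsum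

end SwapWalk

section Comparison

lemma coe_swap_smul {ι V : Type*} [DecidableEq ι] [DecidableEq V] (v : ι ↪ V) (s r : ι) :
    ⇑(Equiv.swap (v s) (v r) • v) = v ∘ Equiv.swap s r := by
  funext i
  exact v.injective.swap_apply s r i

/-- The permutations of tuples that carry the difference between the walk and the product kernel:
for each pair of coordinates, the identity and their transposition. -/
def pairPerm (ι V : Type*) [DecidableEq ι] : (ι × ι) ⊕ (ι × ι) → Equiv.Perm (ι → V) :=
  Sum.elim 1 fun sr => coordPerm V (Equiv.swap sr.1 sr.2)

lemma sum_permMatrix_pairPerm_apply {ι V : Type*} [Fintype ι] [DecidableEq ι] [DecidableEq V]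
    (v u : ι ↪ V) :
    (∑ κ, (pairPerm ι V κ).permMatrix ℝ) v u = ∑ s, ∑ r,
      ((if v = u then 1 else 0) + if Equiv.swap (v s) (v r) • v = u then 1 else 0) := by
  have hcoord (s r : ι) : coordPerm V (Equiv.swap s r) v = ⇑(Equiv.swap (v s) (v r) • v) := by
    rw [coe_swap_smul]
    rfl
  simp only [Matrix.sum_apply, Fintype.sum_sum_type, Fintype.sum_prod_type, pairPerm,
    Sum.elim_inl, Sum.elim_inr, Pi.one_apply, Equiv.Perm.permMatrix, PEquiv.toMatrix_apply,
    Equiv.toPEquiv_apply, Option.mem_some_iff, hcoord, Equiv.Perm.coe_one, id_eq,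
    DFunLike.coe_fn_eq, Finset.sum_add_distrib]

lemma walkMat_swapLaw_nonneg {V Y : Type*} [Fintype V] [DecidableEq V] [MulAction (Equiv.Perm V) Y]
    [DecidableEq Y] {p : V → ℝ} (hp0 : ∀ i, 0 ≤ p i) (v u : Y) :
    0 ≤ walkMat (swapLaw p) Y v u := by
  rw [walkMat_swapLaw_apply]
  refine Finset.sum_nonneg fun i _ => Finset.sum_nonneg fun j _ =>
    mul_nonneg (mul_nonneg (hp0 i) (hp0 j)) ?_
  split_ifs <;> norm_num

variable {ι V : Type*} [Fintype ι] [Fintype V] [DecidableEq V] {p : V → ℝ} {q : ℝ} [DecidableEq ι]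

lemma prodKernel_le_walkMat_swapLaw (hp0 : ∀ i, 0 ≤ p i) (hp : ∑ i, p i = 1) (v u : ι ↪ V) :
    prodKernel ι p v u ≤ walkMat (swapLaw p) (ι ↪ V) v u := by
  rw [walkMat_swapLaw_eq_prodKernel_add hp]
  refine le_add_of_nonneg_right (Finset.sum_nonneg fun s _ => Finset.sum_nonneg fun r _ => ?_)
  have := hp0 (v s)
  have := hp0 (v r)
  split_ifs <;> positivity

lemma walkMat_swapLaw_le (hp0 : ∀ i, 0 ≤ p i) (hpq : ∀ i, p i ≤ q) (hp : ∑ i, p i = 1)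
    (v u : ι ↪ V) : walkMat (swapLaw p) (ι ↪ V) v u ≤
      (prodKernel ι p + q ^ 2 • ∑ κ, (pairPerm ι V κ).permMatrix ℝ) v u := by
  rw [walkMat_swapLaw_eq_prodKernel_add hp, Matrix.add_apply, Matrix.smul_apply, smul_eq_mul,
    sum_permMatrix_pairPerm_apply, Finset.mul_sum]
  simp only [Finset.mul_sum]
  gcongr with s _ r _
  have hs := hp0 (v s)
  have hr := hp0 (v r)
  have hq : p (v s) * p (v r) ≤ q ^ 2 := by
    rw [sq]; exact mul_le_mul (hpq _) (hpq _) hr (hs.trans (hpq _))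
  split_ifs <;> nlinarith

lemma trace_walkMat_swapLaw_pow_le (hp0 : ∀ i, 0 ≤ p i) (hpq : ∀ i, p i ≤ q) (hp : ∑ i, p i = 1)
    (hsmall : 4 * q * Fintype.card ι ≤ 1) (t : ℕ) :
    (walkMat (swapLaw p) (ι ↪ V) ^ t).trace ≤
      ((prodKernel ι p + (2 * (q * Fintype.card ι) ^ 2) • 1) ^ t).trace := by
  have hcommute (κ : (ι × ι) ⊕ (ι × ι)) :
      Commute (prodKernel ι p) ((pairPerm ι V κ).permMatrix ℝ) := by
    rcases κ with _ | κ
    · simp [pairPerm, Commute.one_right]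
    · exact commute_prodKernel_permMatrix _
  have hnonneg (x y : ι → V) :
      0 ≤ (prodKernel ι p + q ^ 2 • ∑ κ, (pairPerm ι V κ).permMatrix ℝ) x y := by
    rw [Matrix.add_apply, Matrix.smul_apply, Matrix.sum_apply]
    refine add_nonneg (prodKernel_nonneg hp0 hpq hsmall x y)
      (smul_nonneg (sq_nonneg q) (Finset.sum_nonneg fun κ _ => ?_))
    rw [Equiv.Perm.permMatrix, PEquiv.toMatrix_apply]
    split_ifs <;> norm_num
  have hcard : (2 * (q * Fintype.card ι) ^ 2) = q ^ 2 * Fintype.card ((ι × ι) ⊕ (ι × ι)) := by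
    simp only [Fintype.card_sum, Fintype.card_prod, Nat.cast_add, Nat.cast_mul]
    ring
  rw [hcard]
  exact (trace_pow_le_trace_pow_of_le_submatrix (tupleEmb ι V) (walkMat_swapLaw_nonneg hp0)
    hnonneg (walkMat_swapLaw_le hp0 hpq hp) t).trans
      (trace_add_smul_sum_permMatrix_pow_le _ (posSemidef_prodKernel hp0 hpq hp hsmall) hcommute
        (sq_nonneg q) t)

lemma trace_submatrix_prodKernel_pow_le (hp0 : ∀ i, 0 ≤ p i) (hpq : ∀ i, p i ≤ q)
    (hp : ∑ i, p i = 1) (hsmall : 4 * q * Fintype.card ι ≤ 1) (t : ℕ) :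
    ((prodKernel ι p).submatrix (tupleEmb ι V) (tupleEmb ι V) ^ t).trace ≤
      (walkMat (swapLaw p) (ι ↪ V) ^ t).trace :=
  trace_pow_le_trace_pow_of_le_submatrix (Function.Embedding.refl _)
    (fun _ _ => prodKernel_nonneg hp0 hpq hsmall _ _) (walkMat_swapLaw_nonneg hp0)
    (fun v u => prodKernel_le_walkMat_swapLaw hp0 hp v u) t

/-- The number of tuples with a repeated entry. -/
def repeatCount (ι V : Type*) [Fintype ι] [DecidableEq ι] [Fintype V] [DecidableEq V] : ℕ :=
  (Finset.univ.map (tupleEmb ι V))ᶜ.card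

lemma sub_le_trace_submatrix_tupleEmb {M : Matrix (ι → V) (ι → V) ℝ} {c : ℝ} (hM : ∀ x, M x x ≤ c) :
    M.trace - repeatCount ι V * c ≤ (M.submatrix (tupleEmb ι V) (tupleEmb ι V)).trace := by
  have hsplit : M.trace = (M.submatrix (tupleEmb ι V) (tupleEmb ι V)).trace +
      ∑ x ∈ (Finset.univ.map (tupleEmb ι V))ᶜ, M x x := by
    simp only [trace, diag_apply, submatrix_apply]
    rw [← Finset.sum_add_sum_compl (Finset.univ.map (tupleEmb ι V)), Finset.sum_map]
  have hrepeat := Finset.sum_le_card_nsmul (Finset.univ.map (tupleEmb ι V))ᶜ _ c fun x _ => hM x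
  rw [nsmul_eq_mul] at hrepeat
  rw [repeatCount]
  linarith

lemma returnWeight_prodKernel_le (hp0 : ∀ i, 0 ≤ p i) (hpq : ∀ i, p i ≤ q) (hp : ∑ i, p i = 1)
    (hsmall : 4 * q * Fintype.card ι ≤ 1) {s : ℕ} {c : ℝ}
    (hc : ∀ x, (prodKernel ι p ^ s) x x ≤ c) :
    returnWeight (prodKernel ι p) (tupleEmb ι V) s ≤
      repeatCount ι V * (2 * q * Fintype.card ι * c) := by
  have hnonneg := prodKernel_nonneg (ι := ι) hp0 hpq hsmall
  have hc0 (x : ι → V) : 0 ≤ c := (pow_apply_nonneg hnonneg s x x).trans (hc x)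
  have hentry (x y : ι → V) : (prodKernel ι p ^ s) x y ≤ c := by
    have hxy := abs_apply_le_of_posSemidef ((posSemidef_prodKernel hp0 hpq hp hsmall).pow s) x y
    linarith [le_abs_self ((prodKernel ι p ^ s) x y), hc x, hc y]
  have hexit (x : ι → V) (hx : x ∉ Finset.univ.map (tupleEmb ι V)) :
      ∑ u, prodKernel ι p x (tupleEmb ι V u) ≤ 2 * q * Fintype.card ι :=
    calc ∑ u, prodKernel ι p x (tupleEmb ι V u)
        = ∑ y ∈ Finset.univ.map (tupleEmb ι V), prodKernel ι p x y := by rw [Finset.sum_map]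
      _ ≤ ∑ y ∈ Finset.univ.erase x, prodKernel ι p x y :=
        Finset.sum_le_sum_of_subset_of_nonneg
          (fun y hy => Finset.mem_erase.2 ⟨fun h => hx (h ▸ hy), Finset.mem_univ y⟩)
          fun y _ _ => hnonneg x y
      _ ≤ ∑ s, 2 * p (x s) := sum_erase_prodKernel_le hp0 hp x
      _ ≤ ∑ _s : ι, 2 * q := by gcongr; exact hpq _
      _ = 2 * q * Fintype.card ι := by
        rw [Finset.sum_const, Finset.card_univ, nsmul_eq_mul, mul_comm]
  rw [returnWeight, repeatCount, ← nsmul_eq_mul]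
  refine Finset.sum_le_card_nsmul _ _ _ fun x hx => ?_
  calc ∑ u, prodKernel ι p x (tupleEmb ι V u) * (prodKernel ι p ^ s) (tupleEmb ι V u) x
      ≤ ∑ u, prodKernel ι p x (tupleEmb ι V u) * c := by
        gcongr with u _
        · exact hnonneg _ _
        · exact hentry _ _
    _ = (∑ u, prodKernel ι p x (tupleEmb ι V u)) * c := (Finset.sum_mul _ _ _).symm
    _ ≤ 2 * q * Fintype.card ι * c :=
        mul_le_mul_of_nonneg_right (hexit x (Finset.mem_compl.1 hx)) (hc0 x)

lemma trace_prodKernel_pow_pred_le (hp0 : ∀ i, 0 ≤ p i) (hpq : ∀ i, p i ≤ q)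
    (hsmall : 4 * q * Fintype.card ι ≤ 1) (t : ℕ) :
    (prodKernel ι p ^ (t - 1)).trace ≤ 2 * (prodKernel ι p ^ t).trace := by
  have hpow := pow_apply_nonneg (prodKernel_nonneg (ι := ι) hp0 hpq hsmall)
  rw [trace, trace, Finset.mul_sum]
  refine Finset.sum_le_sum fun v _ => ?_
  simp only [diag_apply]
  cases t with
  | zero => simp
  | succ t =>
    have hstay : (prodKernel ι p ^ t) v v * prodKernel ι p v v ≤
        (prodKernel ι p ^ (t + 1)) v v := by
      rw [pow_succ, Matrix.mul_apply]
      exact Finset.single_le_sum (f := fun x => (prodKernel ι p ^ t) v x * prodKernel ι p x v)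
        (fun x _ => mul_nonneg (hpow t v x) (prodKernel_nonneg hp0 hpq hsmall x v))
        (Finset.mem_univ v)
    have hhalf := half_le_prodKernel_apply_self hp0 hpq hsmall v
    rw [Nat.add_sub_cancel]
    nlinarith [hpow t v v]

variable {m : Type*} [Fintype m]

lemma prodKernel_pow_apply_self_le (R : SpectralResolution (laplacian p) m) {c : ℝ}
    (hproj0 : ∀ α x, 0 ≤ R.proj α x x) (hproj : ∀ α x, R.proj α x x ≤ c * (R.proj α).trace)
    (heig : ∀ α, R.eig α ≤ 2 * q) (hsmall : 4 * q * Fintype.card ι ≤ 1) (t : ℕ) (v : ι → V) :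
    (prodKernel ι p ^ t) v v ≤ c ^ Fintype.card ι * (prodKernel ι p ^ t).trace := by
  rw [R.prodKernel.pow_eq_sum, Matrix.sum_apply, trace_sum, Finset.mul_sum]
  refine Finset.sum_le_sum fun α _ => ?_
  have hhalf := half_le_one_sub_sum heig hsmall α
  rw [Matrix.smul_apply, trace_smul, smul_eq_mul, smul_eq_mul, mul_left_comm]
  refine mul_le_mul_of_nonneg_left ?_ (pow_nonneg (by simp; linarith) t)
  rw [SpectralResolution.prodKernel_proj, trace_piKronecker, ← Finset.card_univ,
    ← Finset.prod_const, ← Finset.prod_mul_distrib]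
  exact Finset.prod_le_prod (fun s _ => hproj0 _ _) fun s _ => hproj _ _

lemma le_trace_walkMat_swapLaw_pow (R : SpectralResolution (laplacian p) m) {c : ℝ}
    (hp0 : ∀ i, 0 ≤ p i) (hpq : ∀ i, p i ≤ q) (hp : ∑ i, p i = 1)
    (hproj0 : ∀ α x, 0 ≤ R.proj α x x) (hproj : ∀ α x, R.proj α x x ≤ c * (R.proj α).trace)
    (heig : ∀ α, R.eig α ≤ 2 * q) (hsmall : 4 * q * Fintype.card ι ≤ 1) (hc : 0 ≤ c) (t : ℕ) :
    (1 - repeatCount ι V * c ^ Fintype.card ι * (1 + 4 * q * Fintype.card ι * t)) *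
        (prodKernel ι p ^ t).trace ≤ (walkMat (swapLaw p) (ι ↪ V) ^ t).trace := by
  set Q := prodKernel ι p
  set ρ := c ^ Fintype.card ι
  have : 0 ≤ ρ := pow_nonneg hc _
  have hdiag := prodKernel_pow_apply_self_le R hproj0 hproj heig hsmall
  have hq : 0 ≤ q := by
    obtain ⟨i, -⟩ := Finset.exists_ne_zero_of_sum_ne_zero (hp.trans_ne one_ne_zero)
    exact (hp0 i).trans (hpq i)
  have hsub := sub_le_trace_submatrix_tupleEmb (hdiag t)
  have hpaths := trace_submatrix_pow_le (tupleEmb ι V) (prodKernel_nonneg hp0 hpq hsmall) t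
  have hreturn : t * returnWeight Q (tupleEmb ι V) (t - 1) ≤
      t * (repeatCount ι V * (2 * q * Fintype.card ι * (ρ * (2 * (Q ^ t).trace)))) := by
    refine mul_le_mul_of_nonneg_left ?_ t.cast_nonneg
    refine (returnWeight_prodKernel_le hp0 hpq hp hsmall (hdiag (t - 1))).trans ?_
    gcongr
    exact trace_prodKernel_pow_pred_le hp0 hpq hsmall t
  linarith [trace_submatrix_prodKernel_pow_le hp0 hpq hp hsmall t]

end Comparison

section RepeatCount

lemma pow_succ_le_mul_descFactorial_add (N k : ℕ) :
    N ^ (k + 1) ≤ N * N.descFactorial k + k ^ 2 * N ^ k := by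
  induction k with
  | zero => simp
  | succ k ih =>
    have hsub : N ≤ N - k + k := by lia
    calc N ^ (k + 2) = N * N ^ (k + 1) := by ring
      _ ≤ N * (N * N.descFactorial k + k ^ 2 * N ^ k) := Nat.mul_le_mul_left N ih
      _ = N * (N * N.descFactorial k) + k ^ 2 * N ^ (k + 1) := by ring
      _ ≤ N * ((N - k + k) * N.descFactorial k) + k ^ 2 * N ^ (k + 1) := by gcongr
      _ = N * N.descFactorial (k + 1) + k * N * N.descFactorial k + k ^ 2 * N ^ (k + 1) := by
        rw [Nat.descFactorial_succ]; ring
      _ ≤ N * N.descFactorial (k + 1) + k * N * N ^ k + k ^ 2 * N ^ (k + 1) := by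
        gcongr; exact N.descFactorial_le_pow k
      _ = N * N.descFactorial (k + 1) + (k ^ 2 + k) * N ^ (k + 1) := by ring
      _ ≤ N * N.descFactorial (k + 1) + (k + 1) ^ 2 * N ^ (k + 1) := by gcongr; nlinarith

lemma repeatCount_mul_card_le (ι V : Type*) [Fintype ι] [DecidableEq ι] [Fintype V]
    [DecidableEq V] : repeatCount ι V * Fintype.card V ≤
      Fintype.card ι ^ 2 * Fintype.card V ^ Fintype.card ι := by
  have h := pow_succ_le_mul_descFactorial_add (Fintype.card V) (Fintype.card ι)
  have hcompl := Finset.card_add_card_compl (Finset.univ.map (tupleEmb ι V))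
  rw [Finset.card_map, Finset.card_univ, Fintype.card_embedding_eq, Fintype.card_fun] at hcompl
  have hpow : Fintype.card V ^ (Fintype.card ι + 1) =
      Fintype.card V * (Fintype.card V).descFactorial (Fintype.card ι) +
        repeatCount ι V * Fintype.card V := by
    rw [repeatCount, pow_succ, ← hcompl]
    ring
  lia

end RepeatCount

section TransMat

lemma swap_eq_swap_iff {V : Type*} [DecidableEq V] {i j k l : V} (hkl : k ≠ l) :
    Equiv.swap i j = Equiv.swap k l ↔ (i = k ∧ j = l) ∨ (i = l ∧ j = k) := by
  refine ⟨fun h => ?_, ?_⟩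
  · have hk : Equiv.swap i j k = l := by rw [h, Equiv.swap_apply_left]
    rw [Equiv.swap_apply_def] at hk
    split_ifs at hk with hki hkj
    · exact Or.inl ⟨hki.symm, hk⟩
    · exact Or.inr ⟨hk, hkj.symm⟩
    · exact absurd hk hkl
  · rintro (⟨rfl, rfl⟩ | ⟨rfl, rfl⟩)
    · rfl
    · exact Equiv.swap_comm _ _

variable {V : Type*} [Fintype V] [DecidableEq V] (p : V → ℝ)

lemma swapLaw_one : swapLaw p 1 = ∑ i, p i ^ 2 := by
  simp [swapLaw, Equiv.Perm.one_def, Equiv.swap_eq_refl_iff, sq]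

lemma swapLaw_swap {i j : V} (hij : i ≠ j) : swapLaw p (Equiv.swap i j) = 2 * p i * p j := by
  have hterm (k l : V) : (if Equiv.swap k l = Equiv.swap i j then p k * p l else 0) =
      (if k = i then if l = j then p k * p l else 0 else 0) +
        if k = j then if l = i then p k * p l else 0 else 0 := by
    simp only [swap_eq_swap_iff hij]
    by_cases hki : k = i
    · simp [hki, hij]
    · simp [hki, ite_and]
  simp only [swapLaw, hterm, Finset.sum_add_distrib, Finset.sum_ite_eq', Finset.mem_univ, if_true,
    Finset.sum_ite_irrel, Finset.sum_const_zero]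
  ring

lemma swapLaw_eq_zero {g : Equiv.Perm V} (hg : ∀ i j, g ≠ Equiv.swap i j) : swapLaw p g = 0 := by
  simp [swapLaw, fun i j => (hg i j).symm]

lemma walkMat_self_apply {G : Type*} [Group G] [Fintype G] [DecidableEq G] (μ : G → ℝ)
    (x y : G) : walkMat μ G x y = μ (y * x⁻¹) := by
  simp [walkMat, ← eq_mul_inv_iff_mul_eq]

/-- The law on cards that gives weights proportional to `a` on `A` and to `b` off `A`. -/
def blockLaw (a b : ℝ) (A : Finset V) (i : V) : ℝ := (if i ∈ A then a else b) / Fintype.card V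

lemma sum_comp_blockLaw (φ : ℝ → ℝ) (a b : ℝ) (A : Finset V) : ∑ i, φ (blockLaw a b A i) =
    A.card * φ (a / Fintype.card V) + Aᶜ.card * φ (b / Fintype.card V) := by
  rw [← Finset.sum_add_sum_compl A,
    Finset.sum_congr rfl fun i (hi : i ∈ A) => by rw [blockLaw, if_pos hi],
    Finset.sum_congr rfl fun i (hi : i ∈ Aᶜ) => by rw [blockLaw, if_neg (Finset.mem_compl.1 hi)]]
  simp

lemma transMat_eq_walkMat (a b : ℝ) {N : ℕ} (A : Finset (Fin N)) :
    transMat a b A = walkMat (swapLaw (blockLaw a b A)) (Equiv.Perm (Fin N)) := by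
  ext x y
  rw [walkMat_self_apply, transMat]
  split_ifs with hyx hA hB hAB
  · rw [hyx, mul_inv_cancel, swapLaw_one, sum_comp_blockLaw (· ^ 2), Fintype.card_fin]
    ring
  · obtain ⟨i, j, hij, hi, hj, h⟩ := hA
    simp only [h, swapLaw_swap _ hij, blockLaw, hi, hj, if_true, Fintype.card_fin]
    ring
  · obtain ⟨i, j, hij, hi, hj, h⟩ := hB
    simp only [h, swapLaw_swap _ hij, blockLaw, hi, hj, if_false, Fintype.card_fin]
    ring
  · obtain ⟨i, j, hi, hj, h⟩ := hAB
    have hij : i ≠ j := fun hij => hj (hij ▸ hi)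
    simp only [h, swapLaw_swap _ hij, blockLaw, hi, hj, if_true, if_false, Fintype.card_fin]
    ring
  · refine (swapLaw_eq_zero _ fun i j h => ?_).symm
    obtain rfl | hij := eq_or_ne i j
    · rw [Equiv.swap_self] at h
      exact hyx (mul_inv_eq_one.1 h)
    by_cases hi : i ∈ A <;> by_cases hj : j ∈ A
    · exact hA ⟨i, j, hij, hi, hj, h⟩
    · exact hAB ⟨i, j, hi, hj, h⟩
    · exact hAB ⟨j, i, hj, hi, h.trans (Equiv.swap_comm i j)⟩
    · exact hB ⟨i, j, hij, hi, hj, h⟩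

end TransMat

section BlockModes

/-- The four types of eigenfunctions of the motion of one card: the constants, the functions
supported in one of the two blocks and of sum zero, and the function equal to `1` on the first block
and to `-1` on the second. -/
inductive Mode
  | const
  | inFst
  | inSnd
  | sign
  deriving DecidableEq

instance : Fintype Mode where
  elems := {.const, .inFst, .inSnd, .sign}
  complete := by rintro (_ | _ | _ | _) <;> simp

lemma sum_mode {R : Type*} [AddCommMonoid R] (g : Mode → R) :
    ∑ α, g α = g .const + g .inFst + g .inSnd + g .sign := by
  simp [Finset.univ, Fintype.elems, add_assoc]

/-- The eigenvalue of the mode, in units of the inverse number of cards. -/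
def modeRate (a b : ℝ) : Mode → ℝ
  | .const => 0
  | .inFst => 2 * a
  | .inSnd => 2 * b
  | .sign => 2 * a * b

/-- The multiplicity of the mode, as a function of the number of cards. -/
def modeDim (x : ℝ) : Mode → ℝ
  | .const => 1
  | .inFst => x / 2 - 1
  | .inSnd => x / 2 - 1
  | .sign => 1

variable {V : Type*} [DecidableEq V]

/-- The projection on the functions supported in `A` and of sum zero. -/
def blockProj (A : Finset V) : Matrix V V ℝ :=
  of fun i j => if i ∈ A ∧ j ∈ A then (1 : Matrix V V ℝ) i j - 1 / A.card else 0

/-- The sign distinguishing `A` from its complement. -/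
def blockSign (A : Finset V) (i : V) : ℝ := if i ∈ A then 1 else -1

lemma blockSign_mul_self (A : Finset V) (i : V) : blockSign A i * blockSign A i = 1 := by
  rw [blockSign]
  split_ifs <;> norm_num

lemma blockProj_apply_self (A : Finset V) (i : V) :
    blockProj A i i = if i ∈ A then 1 - 1 / (A.card : ℝ) else 0 := by
  simp [blockProj]

lemma blockProj_apply_self_nonneg (A : Finset V) (i : V) : 0 ≤ blockProj A i i := by
  rw [blockProj_apply_self]
  split_ifs with hi
  · exact Nat.one_sub_one_div_cast_nonneg A.card
  · exact le_rfl

variable [Fintype V]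

/-- The projection on the mode, when the blocks are `A` and `Aᶜ` and have the same size. -/
def modeProj (A : Finset V) : Mode → Matrix V V ℝ
  | .const => of fun _ _ => 1 / Fintype.card V
  | .inFst => blockProj A
  | .inSnd => blockProj Aᶜ
  | .sign => of fun i j => blockSign A i * blockSign A j / Fintype.card V

lemma trace_blockProj {A : Finset V} (hA : A.Nonempty) : (blockProj A).trace = A.card - 1 := by
  have hcard : (A.card : ℝ) ≠ 0 := Nat.cast_ne_zero.2 hA.card_ne_zero
  simp only [trace, diag_apply, blockProj_apply_self, ← Finset.sum_filter,
    Finset.filter_univ_mem, Finset.sum_const, nsmul_eq_mul]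
  field_simp

lemma blockProj_apply_self_le {A : Finset V} (hA : A.Nonempty) (i : V) :
    blockProj A i i ≤ 1 / A.card * (blockProj A).trace := by
  have hcard : (A.card : ℝ) ≠ 0 := Nat.cast_ne_zero.2 hA.card_ne_zero
  have htrace : 1 / A.card * ((A.card : ℝ) - 1) = 1 - 1 / A.card := by field
  rw [trace_blockProj hA, htrace, blockProj_apply_self]
  split_ifs with hi
  · exact le_rfl
  · exact Nat.one_sub_one_div_cast_nonneg A.card

lemma sum_blockProj_apply (A : Finset V) (j : V) : ∑ i, blockProj A i j = 0 := by
  by_cases hj : j ∈ A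
  · have hA : (A.card : ℝ) ≠ 0 := Nat.cast_ne_zero.2 (Finset.card_ne_zero_of_mem hj)
    simp [blockProj, hj, Finset.sum_sub_distrib, one_apply, hA]
  · simp [blockProj, hj]

lemma laplacian_mul_apply (p : V → ℝ) (M : Matrix V V ℝ) (i j : V) :
    (laplacian p * M) i j = 2 * p i * (M i j - ∑ k, p k * M k j) := by
  rw [laplacian, Matrix.smul_mul, Matrix.sub_mul, Matrix.smul_apply, Matrix.sub_apply,
    diagonal_mul, Matrix.mul_apply, smul_eq_mul]
  simp only [vecMulVec_apply, mul_assoc, ← Finset.mul_sum]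
  ring

lemma laplacian_mul_blockProj {A : Finset V} {p : V → ℝ} {β : ℝ} (hp : ∀ i ∈ A, p i = β) :
    laplacian p * blockProj A = (2 * β) • blockProj A := by
  have hconst (i j : V) : p i * blockProj A i j = β * blockProj A i j := by
    by_cases hi : i ∈ A
    · rw [hp i hi]
    · simp [blockProj, hi]
  ext i j
  rw [laplacian_mul_apply, Matrix.smul_apply, smul_eq_mul, mul_sub]
  simp only [hconst, ← Finset.mul_sum, sum_blockProj_apply]
  linear_combination 2 * hconst i j

lemma modeProj_apply_self_nonneg (A : Finset V) (α : Mode) (i : V) : 0 ≤ modeProj A α i i := by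
  cases α with
  | const => exact one_div_nonneg.2 (Nat.cast_nonneg _)
  | inFst => exact blockProj_apply_self_nonneg A i
  | inSnd => exact blockProj_apply_self_nonneg Aᶜ i
  | sign => exact div_nonneg (mul_self_nonneg _) (Nat.cast_nonneg _)

variable {A : Finset V} (hA : Fintype.card V = 2 * A.card)
include hA

lemma card_compl_eq_card : Aᶜ.card = A.card := by
  rw [Finset.card_compl]
  lia

lemma sum_blockLaw [Nonempty V] (a b : ℝ) : ∑ i, blockLaw a b A i = (a + b) / 2 := by
  have hpos : 0 < Fintype.card V := Fintype.card_pos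
  have hcard : (A.card : ℝ) ≠ 0 := Nat.cast_ne_zero.2 (by lia)
  refine (sum_comp_blockLaw id a b A).trans ?_
  rw [card_compl_eq_card hA, hA, id, id, Nat.cast_mul]
  field

lemma sum_modeProj : ∑ α, modeProj A α = 1 := by
  ext i j
  have hpos : 0 < Fintype.card V := Fintype.card_pos_iff.2 ⟨i⟩
  have hcard : (A.card : ℝ) ≠ 0 := Nat.cast_ne_zero.2 (by lia)
  simp only [sum_mode, modeProj, blockProj, blockSign, Matrix.add_apply, of_apply,
    card_compl_eq_card hA, hA, Finset.mem_compl]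
  push_cast
  by_cases hij : i = j
  · subst hij
    by_cases hi : i ∈ A <;> simp only [hi, one_apply_eq, not_true, not_false_iff, and_self,
      if_true, if_false] <;> field
  · by_cases hi : i ∈ A <;> by_cases hj : j ∈ A <;> simp only [hi, hj, one_apply_ne hij,
      not_true, not_false_iff, and_true, and_false, if_true, if_false] <;> field

lemma laplacian_mul_modeProj {a b : ℝ} (hab : a + b = 2) (α : Mode) :
    laplacian (blockLaw a b A) * modeProj A α =
      (modeRate a b α / Fintype.card V) • modeProj A α := by
  obtain _ | hV := isEmpty_or_nonempty V
  · exact Subsingleton.elim _ _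
  cases α with
  | const =>
    ext i j
    rw [laplacian_mul_apply, modeProj, modeRate]
    simp only [of_apply, ← Finset.sum_mul, sum_blockLaw hA, hab]
    simp
  | inFst =>
    have hp (i : V) (hi : i ∈ A) : blockLaw a b A i = a / Fintype.card V := by
      rw [blockLaw, if_pos hi]
    rw [modeProj, modeRate, laplacian_mul_blockProj hp, mul_div_assoc]
  | inSnd =>
    have hp (i : V) (hi : i ∈ Aᶜ) : blockLaw a b A i = b / Fintype.card V := by
      rw [blockLaw, if_neg (Finset.mem_compl.1 hi)]
    rw [modeProj, modeRate, laplacian_mul_blockProj hp, mul_div_assoc]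
  | sign =>
    have hsign (k : V) : blockLaw a b A k * blockSign A k = blockLaw a (-b) A k := by
      rw [blockLaw, blockSign, blockLaw]
      split_ifs <;> ring
    ext i j
    rw [laplacian_mul_apply, modeProj, modeRate, Matrix.smul_apply]
    simp only [of_apply, mul_div_assoc, ← mul_assoc, hsign, ← Finset.sum_mul, sum_blockLaw hA,
      smul_eq_mul]
    obtain rfl : b = 2 - a := by linarith
    rw [blockLaw, blockSign]
    split_ifs <;> ring

/-- The spectral resolution of the motion of one card by the modes of two blocks of equal size. -/
@[simps]
def modeResolution {a b : ℝ} (hab : a + b = 2) :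
    SpectralResolution (laplacian (blockLaw a b A)) Mode where
  proj := modeProj A
  eig α := modeRate a b α / Fintype.card V
  sum_proj := sum_modeProj hA
  mul_proj := laplacian_mul_modeProj hA hab

lemma trace_modeProj [Nonempty V] (α : Mode) :
    (modeProj A α).trace = modeDim (Fintype.card V) α := by
  have hpos : 0 < Fintype.card V := Fintype.card_pos
  have hcard : (Fintype.card V : ℝ) ≠ 0 := Nat.cast_ne_zero.2 hpos.ne'
  have hhalf : (A.card : ℝ) = Fintype.card V / 2 := by rw [hA]; push_cast; ring
  have hcompl := card_compl_eq_card hA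
  cases α with
  | const => simp [modeProj, modeDim, trace, hcard]
  | inFst => rw [modeProj, modeDim, trace_blockProj (Finset.card_pos.1 (by lia)), hhalf]
  | inSnd => rw [modeProj, modeDim, trace_blockProj (Finset.card_pos.1 (by lia)), hcompl, hhalf]
  | sign => simp [modeProj, modeDim, trace, hcard, blockSign_mul_self]

lemma modeProj_apply_self_le (α : Mode) (i : V) :
    modeProj A α i i ≤ 2 / Fintype.card V * (modeProj A α).trace := by
  have hV : Nonempty V := ⟨i⟩
  have hpos : 0 < Fintype.card V := Fintype.card_pos
  have hinv : (2 / Fintype.card V : ℝ) = 1 / A.card := by rw [hA]; push_cast; field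
  have hinv' : (1 / Fintype.card V : ℝ) ≤ 2 / Fintype.card V := by gcongr; norm_num
  have hcompl := card_compl_eq_card hA
  cases α with
  | const => rwa [trace_modeProj hA, modeDim, mul_one]
  | inFst => exact hinv ▸ blockProj_apply_self_le (Finset.card_pos.1 (by lia)) i
  | inSnd =>
    exact hinv ▸ hcompl ▸ blockProj_apply_self_le (Finset.card_pos.1 (by lia)) i
  | sign =>
    rw [trace_modeProj hA, modeDim, mul_one, modeProj, of_apply, blockSign_mul_self]
    exact hinv'

end BlockModes

section Asymptotics

/-- A time just before the mixing of `x` cards, at which the cards of the lighter block that have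
never moved are still about as numerous as the fixed points of a random permutation. -/
def stepCount (b c x : ℝ) : ℕ := ⌊x / (2 * b) * (Real.log x - c)⌋₊

/-- The trace of the `T`-th power of the product chain on `k`-tuples of `x` cards, as a sum over the
joint modes, when all the eigenvalues are moved by `δ`. -/
def modeSum (a b : ℝ) (k T : ℕ) (x δ : ℝ) : ℝ :=
  ∑ α : Fin k → Mode,
    (1 - ∑ s, modeRate a b (α s) / x + δ) ^ T * ∏ s, modeDim x (α s)

/-- The limit of `modeDim x α` times the decay of the mode after `stepCount b c x` steps. -/
def modeLimit (c : ℝ) : Mode → ℝ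
  | .const => 1
  | .inFst => 0
  | .inSnd => Real.exp c / 2
  | .sign => 0

lemma tendsto_one_sub_pow_mul_exp {I : Type*} {l : Filter I} {T : I → ℕ} {y r : I → ℝ}
    (hy : Tendsto y l (𝓝 0)) (hTy : Tendsto (fun i => T i * y i ^ 2) l (𝓝 0))
    (hr : Tendsto (fun i => T i * y i - r i) l (𝓝 0)) :
    Tendsto (fun i => (1 - y i) ^ T i * Real.exp (r i)) l (𝓝 1) := by
  have hsmall : ∀ᶠ i in l, |y i| < 1 / 2 := hy.abs.eventually_lt_const (by norm_num)
  have hlog : Tendsto (fun i => T i * (y i + Real.log (1 - y i))) l (𝓝 0) := by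
    refine squeeze_zero_norm' ?_ (by simpa using hTy.const_mul 2)
    filter_upwards [hsmall] with i hi
    have hbound : |y i + Real.log (1 - y i)| ≤ |y i| ^ 2 / (1 - |y i|) := by
      simpa using Real.abs_log_sub_add_sum_range_le (hi.trans one_half_lt_one) 1
    have hquot : |y i| ^ 2 / (1 - |y i|) ≤ 2 * y i ^ 2 := by
      rw [div_le_iff₀ (by linarith), sq_abs]
      nlinarith [sq_nonneg (y i)]
    rw [Real.norm_eq_abs, abs_mul, Nat.abs_cast, mul_left_comm]
    exact mul_le_mul_of_nonneg_left (hbound.trans hquot) (Nat.cast_nonneg _)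
  have hexp := (Real.continuous_exp.tendsto _).comp (hlog.sub hr)
  rw [sub_zero, Real.exp_zero] at hexp
  refine hexp.congr' ?_
  filter_upwards [hsmall] with i hi
  have hpos : 0 < 1 - y i := by linarith [(abs_lt.1 hi).2]
  rw [← Real.exp_log (pow_pos hpos (T i)), Real.log_pow, ← Real.exp_add, Function.comp_apply]
  congr 1
  ring

variable {b : ℝ}

lemma tendsto_stepCount_div_sub (hb : 0 < b) (c : ℝ) :
    Tendsto (fun x => stepCount b c x / x - (Real.log x - c) / (2 * b)) atTop (𝓝 0) := by
  refine squeeze_zero_norm' ?_ tendsto_inv_atTop_zero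
  filter_upwards [Real.tendsto_log_atTop.eventually_ge_atTop c, eventually_gt_atTop 0]
    with x hlog hx
  have hfloor : |(stepCount b c x : ℝ) - x / (2 * b) * (Real.log x - c)| ≤ 1 :=
    Nat.abs_floor_sub_le (mul_nonneg (by positivity) (sub_nonneg.2 hlog))
  have hdiv : stepCount b c x / x - (Real.log x - c) / (2 * b) =
      (stepCount b c x - x / (2 * b) * (Real.log x - c)) / x := by field
  rw [hdiv, Real.norm_eq_abs, abs_div, abs_of_pos hx, inv_eq_one_div]
  gcongr

lemma tendsto_stepCount_div_sq (hb : 0 < b) (c : ℝ) :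
    Tendsto (fun x => stepCount b c x / x ^ 2) atTop (𝓝 0) := by
  have hlog : Tendsto (fun x => Real.log x / x) atTop (𝓝 0) := by
    simpa only [pow_one, one_mul, add_zero] using
      Real.tendsto_pow_log_div_mul_add_atTop 1 0 1 one_ne_zero
  have hlim := ((tendsto_stepCount_div_sub hb c).mul tendsto_inv_atTop_zero).add
    ((hlog.sub (tendsto_inv_atTop_zero.const_mul c)).div_const (2 * b))
  simp only [mul_zero, sub_zero, zero_div, add_zero] at hlim
  refine hlim.congr fun x => ?_
  ring

lemma tendsto_one_sub_pow_stepCount_mul_exp (hb : 0 < b) (c θ C : ℝ) :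
    Tendsto (fun x => (1 - θ / x + C / x ^ 2) ^ stepCount b c x *
      Real.exp (θ * ((Real.log x - c) / (2 * b)))) atTop (𝓝 1) := by
  have hcoef : Tendsto (fun x : ℝ => θ - C * x⁻¹) atTop (𝓝 θ) := by
    simpa only [mul_zero, sub_zero] using (tendsto_inv_atTop_zero.const_mul C).const_sub θ
  have hsq := tendsto_stepCount_div_sq hb c
  have hy : Tendsto (fun x : ℝ => (θ - C * x⁻¹) * x⁻¹) atTop (𝓝 0) := by
    simpa only [mul_zero] using hcoef.mul tendsto_inv_atTop_zero
  have hTy : Tendsto (fun x => stepCount b c x * ((θ - C * x⁻¹) * x⁻¹) ^ 2) atTop (𝓝 0) := by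
    have hlim := hsq.mul (hcoef.pow 2)
    rw [zero_mul] at hlim
    exact hlim.congr fun x => by ring
  have hr : Tendsto (fun x => stepCount b c x * ((θ - C * x⁻¹) * x⁻¹) -
      θ * ((Real.log x - c) / (2 * b))) atTop (𝓝 0) := by
    have hlim := ((tendsto_stepCount_div_sub hb c).const_mul θ).sub (hsq.const_mul C)
    rw [mul_zero, mul_zero, sub_zero] at hlim
    exact hlim.congr fun x => by ring
  exact (tendsto_one_sub_pow_mul_exp hy hTy hr).congr fun x => by ring_nf

lemma exp_neg_mul_log_sub {x : ℝ} (hx : 0 < x) (u c : ℝ) :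
    Real.exp (-(u * (Real.log x - c))) = Real.exp (u * c) * x ^ (-u) := by
  rw [Real.rpow_def_of_pos hx, ← Real.exp_add]
  ring_nf

variable {a : ℝ} (c : ℝ)

lemma tendsto_modeDim_mul_exp (hb : 0 < b) (hba : b < a) (α : Mode) :
    Tendsto (fun x => modeDim x α *
      Real.exp (-(modeRate a b α * ((Real.log x - c) / (2 * b))))) atTop (𝓝 (modeLimit c α)) := by
  have hblock : Tendsto (fun x : ℝ => (x / 2 - 1) * x⁻¹) atTop (𝓝 (1 / 2)) := by
    refine (((tendsto_inv_atTop_zero (𝕜 := ℝ)).const_sub (1 / 2)).congr' ?_).trans (by simp)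
    filter_upwards [eventually_ne_atTop 0] with x hx
    field
  have hab : 0 < a / b - 1 := sub_pos.2 ((one_lt_div hb).2 hba)
  cases α with
  | const => simp [modeDim, modeRate, modeLimit]
  | inFst =>
    have hlim := (hblock.mul (tendsto_rpow_neg_atTop hab)).mul_const (Real.exp (a / b * c))
    rw [mul_zero, zero_mul] at hlim
    refine hlim.congr' ?_
    filter_upwards [eventually_gt_atTop 0] with x hx
    have hrpow : x ^ (-(a / b)) = x⁻¹ * x ^ (-(a / b - 1)) := by
      rw [← Real.rpow_neg_one, ← Real.rpow_add hx]
      ring_nf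
    have hrate : 2 * a * ((Real.log x - c) / (2 * b)) = a / b * (Real.log x - c) := by field
    rw [modeDim, modeRate, hrate, exp_neg_mul_log_sub hx, hrpow]
    ring
  | inSnd =>
    have hlim := hblock.mul_const (Real.exp c)
    rw [one_div_mul_eq_div] at hlim
    refine hlim.congr' ?_
    filter_upwards [eventually_gt_atTop 0] with x hx
    have hrate : 2 * b * ((Real.log x - c) / (2 * b)) = 1 * (Real.log x - c) := by field
    rw [modeDim, modeRate, hrate, exp_neg_mul_log_sub hx, Real.rpow_neg_one, one_mul]
    ring
  | sign =>
    have hlim := (tendsto_rpow_neg_atTop (hb.trans hba)).const_mul (Real.exp (a * c))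
    rw [mul_zero] at hlim
    refine hlim.congr' ?_
    filter_upwards [eventually_gt_atTop 0] with x hx
    have hrate : 2 * a * b * ((Real.log x - c) / (2 * b)) = a * (Real.log x - c) := by field
    rw [modeDim, modeRate, hrate, exp_neg_mul_log_sub hx, one_mul]

lemma sum_prod_modeLimit (k : ℕ) :
    ∑ α : Fin k → Mode, ∏ s, modeLimit c (α s) = (1 + Real.exp c / 2) ^ k := by
  rw [← Fintype.piFinset_univ, ← Finset.prod_univ_sum]
  simp [sum_mode, modeLimit]

lemma tendsto_modeSum (hb : 0 < b) (hba : b < a) (k : ℕ) (C : ℝ) :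
    Tendsto (fun x => modeSum a b k (stepCount b c x) x (C / x ^ 2)) atTop
      (𝓝 ((1 + Real.exp c / 2) ^ k)) := by
  rw [← sum_prod_modeLimit]
  refine tendsto_finsetSum _ fun α _ => ?_
  have hlim := (tendsto_one_sub_pow_stepCount_mul_exp hb c (∑ s, modeRate a b (α s)) C).mul
    (tendsto_finsetProd Finset.univ fun s _ => tendsto_modeDim_mul_exp c hb hba (α s))
  rw [one_mul] at hlim
  refine hlim.congr fun x => ?_
  have hexp : Real.exp ((∑ s, modeRate a b (α s)) * ((Real.log x - c) / (2 * b))) *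
      ∏ s, Real.exp (-(modeRate a b (α s) * ((Real.log x - c) / (2 * b)))) = 1 := by
    rw [← Real.exp_sum, ← Real.exp_add, Finset.sum_mul, Finset.sum_neg_distrib, add_neg_cancel,
      Real.exp_zero]
  rw [Finset.prod_mul_distrib, ← Finset.sum_div]
  linear_combination (1 - (∑ s, modeRate a b (α s)) / x + C / x ^ 2) ^ stepCount b c x *
    (∏ s, modeDim x (α s)) * hexp

end Asymptotics

section FactorialMoment

variable {Ω : Type*} [Fintype Ω]

/-- The `k`-th factorial moment of `F` under the weights `w`. -/
def factorialMoment (w : Ω → ℝ) (F : Ω → ℕ) (k : ℕ) : ℝ :=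
  ∑ x, w x * ((F x).descFactorial k : ℝ)

/-- The mass that the image of the weights `w` under `F` gives to `j`. -/
def pushMass (w : Ω → ℝ) (F : Ω → ℕ) (j : ℕ) : ℝ :=
  ∑ x, w x * if F x = j then 1 else 0

lemma abs_indicator_sub_alternating_sum_choose_le (m J : ℕ) :
    |(if m = 0 then (1 : ℝ) else 0) - ∑ i ∈ Finset.range J, (-1) ^ i * (m.choose i : ℝ)| ≤
      m.choose J := by
  rcases J with _ | J
  · rw [Finset.sum_range_zero, sub_zero, Nat.choose_zero_right]
    split_ifs <;> norm_num
  rcases m with _ | m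
  · simp [Finset.sum_range_succ']
  have hsum : ∑ i ∈ Finset.range (J + 1), (-1) ^ i * ((m + 1).choose i : ℝ) =
      (-1) ^ J * m.choose J := by
    exact_mod_cast Int.alternating_sum_range_choose_eq_choose (n := m) (m := J)
  rw [hsum, if_neg m.succ_ne_zero, zero_sub, abs_neg, abs_mul, abs_neg_one_pow, one_mul,
    Nat.abs_cast, Nat.choose_succ_succ]
  exact_mod_cast Nat.le_add_right _ _

lemma descFactorial_add_div_factorial (F j i : ℕ) :
    (F.descFactorial (j + i) : ℝ) / (j.factorial * i.factorial) =
      F.choose j * (F - j).choose i := by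
  rw [← Nat.descFactorial_mul_descFactorial (Nat.le_add_right j i), Nat.add_sub_cancel_left,
    Nat.descFactorial_eq_factorial_mul_choose, Nat.descFactorial_eq_factorial_mul_choose]
  push_cast
  field_simp

lemma abs_indicator_sub_alternating_sum_descFactorial_le (F j J : ℕ) :
    |(if F = j then (1 : ℝ) else 0) - ∑ i ∈ Finset.range J,
        (-1) ^ i * ((F.descFactorial (j + i) : ℝ) / (j.factorial * i.factorial))| ≤
      F.descFactorial (j + J) / (j.factorial * J.factorial) := by
  have hind : (if F = j then (1 : ℝ) else 0) = F.choose j * if F - j = 0 then 1 else 0 := by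
    rcases lt_trichotomy F j with h | rfl | h
    · rw [if_neg h.ne, Nat.choose_eq_zero_of_lt h, Nat.cast_zero, zero_mul]
    · rw [if_pos rfl, Nat.sub_self, if_pos rfl, Nat.choose_self, Nat.cast_one, one_mul]
    · rw [if_neg h.ne', if_neg (Nat.sub_ne_zero_of_lt h), mul_zero]
  simp only [descFactorial_add_div_factorial, hind, mul_left_comm _ (F.choose j : ℝ)]
  rw [← Finset.mul_sum, ← mul_sub, abs_mul, Nat.abs_cast]
  exact mul_le_mul_of_nonneg_left (abs_indicator_sub_alternating_sum_choose_le (F - j) J)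
    (Nat.cast_nonneg _)

lemma abs_pushMass_sub_alternating_sum_factorialMoment_le {w : Ω → ℝ} (hw : ∀ x, 0 ≤ w x)
    (F : Ω → ℕ) (j J : ℕ) :
    |pushMass w F j - ∑ i ∈ Finset.range J,
        (-1) ^ i * (factorialMoment w F (j + i) / (j.factorial * i.factorial))| ≤
      factorialMoment w F (j + J) / (j.factorial * J.factorial) := by
  have hexpand : pushMass w F j - ∑ i ∈ Finset.range J,
        (-1) ^ i * (factorialMoment w F (j + i) / (j.factorial * i.factorial)) =
      ∑ x, w x * ((if F x = j then (1 : ℝ) else 0) - ∑ i ∈ Finset.range J,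
        (-1) ^ i * (((F x).descFactorial (j + i) : ℝ) / (j.factorial * i.factorial))) := by
    simp only [pushMass, factorialMoment, mul_sub, Finset.sum_sub_distrib, Finset.mul_sum,
      Finset.sum_div, mul_left_comm (w _), mul_div_assoc]
    rw [Finset.sum_comm]
  rw [hexpand, factorialMoment, Finset.sum_div]
  refine (Finset.abs_sum_le_sum_abs _ _).trans (Finset.sum_le_sum fun x _ => ?_)
  rw [abs_mul, abs_of_nonneg (hw x), mul_div_assoc]
  exact mul_le_mul_of_nonneg_left
    (abs_indicator_sub_alternating_sum_descFactorial_le (F x) j J) (hw x)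

end FactorialMoment

section Poisson

lemma tendsto_alternating_sum_poissonPMF (m : ℝ) (j : ℕ) :
    Tendsto (fun J => ∑ i ∈ Finset.range J,
      (-1) ^ i * (m ^ (j + i) / (j.factorial * i.factorial))) atTop (𝓝 (poissonPMF m j)) := by
  have hexp : HasSum (fun i : ℕ => (-m) ^ i / (i.factorial : ℝ)) (Real.exp (-m)) := by
    rw [Real.exp_eq_exp_ℝ]
    exact NormedSpace.expSeries_div_hasSum_exp (-m)
  have hlim := (hexp.mul_left (m ^ j / j.factorial)).tendsto_sum_nat
  rw [div_mul_eq_mul_div, mul_comm (m ^ j), ← poissonPMF] at hlim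
  refine hlim.congr fun J => Finset.sum_congr rfl fun i _ => ?_
  rw [pow_add, neg_pow m]
  field_simp

lemma tendsto_pow_add_div_factorial (m : ℝ) (j : ℕ) :
    Tendsto (fun J : ℕ => m ^ (j + J) / (j.factorial * J.factorial : ℝ)) atTop (𝓝 0) := by
  have hlim := (FloorSemiring.tendsto_pow_div_factorial_atTop m).const_mul (m ^ j / j.factorial)
  rw [mul_zero] at hlim
  simpa only [pow_add, div_mul_div_comm] using hlim

lemma summable_poissonPMF (m : ℝ) : Summable (poissonPMF m) :=
  ((Real.summable_pow_div_factorial m).mul_left (Real.exp (-m))).congr fun _ =>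
    (mul_div_assoc _ _ _).symm

variable {I : Type*} {l : Filter I} {Ω : I → Type*} [∀ i, Fintype (Ω i)]

lemma tendsto_pushMass_of_tendsto_factorialMoment {w : ∀ i, Ω i → ℝ} (hw : ∀ i x, 0 ≤ w i x)
    {F : ∀ i, Ω i → ℕ} {m : ℝ}
    (h : ∀ k, Tendsto (fun i => factorialMoment (w i) (F i) k) l (𝓝 (m ^ k))) (j : ℕ) :
    Tendsto (fun i => pushMass (w i) (F i) j) l (𝓝 (poissonPMF m j)) := by
  rw [Metric.tendsto_nhds]
  intro ε hε
  have hε3 : 0 < ε / 3 := by positivity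
  obtain ⟨J, hsumJ, htailJ⟩ := (((tendsto_alternating_sum_poissonPMF m j).eventually
    (Metric.ball_mem_nhds _ hε3)).and
      ((tendsto_pow_add_div_factorial m j).eventually_lt_const hε3)).exists
  have hsum : Tendsto (fun i => ∑ r ∈ Finset.range J,
      (-1) ^ r * (factorialMoment (w i) (F i) (j + r) / (j.factorial * r.factorial))) l
      (𝓝 (∑ r ∈ Finset.range J, (-1) ^ r * (m ^ (j + r) / (j.factorial * r.factorial)))) :=
    tendsto_finsetSum _ fun r _ => ((h (j + r)).div_const _).const_mul _
  have htail : Tendsto (fun i => factorialMoment (w i) (F i) (j + J) /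
      (j.factorial * J.factorial : ℝ)) l (𝓝 (m ^ (j + J) / (j.factorial * J.factorial : ℝ))) :=
    (h (j + J)).div_const _
  filter_upwards [hsum.eventually (Metric.ball_mem_nhds _ hε3),
    htail.eventually_lt_const htailJ] with i hsumi htaili
  have hbonf := (abs_pushMass_sub_alternating_sum_factorialMoment_le (hw i) (F i) j J).trans_lt
    htaili
  rw [← Real.dist_eq] at hbonf
  calc dist (pushMass (w i) (F i) j) (poissonPMF m j)
      ≤ _ := dist_triangle4 _ _ _ _
    _ < ε / 3 + ε / 3 + ε / 3 := add_lt_add (add_lt_add hbonf hsumi) hsumJ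
    _ = ε := add_thirds ε

end Poisson

section TotalVariation

lemma sum_abs_pushMass_sub_le_dTV {Ω : Type*} [Fintype Ω] (p q : Ω → ℝ) (F : Ω → ℕ)
    (s : Finset ℕ) : (∑ j ∈ s, |pushMass p F j - pushMass q F j|) / 2 ≤ dTV p q := by
  refine div_le_div_of_nonneg_right ?_ zero_le_two
  calc ∑ j ∈ s, |pushMass p F j - pushMass q F j|
      ≤ ∑ j ∈ s, ∑ x, |p x - q x| * (if F x = j then 1 else 0) := by
        refine Finset.sum_le_sum fun j _ => ?_
        rw [pushMass, pushMass, ← Finset.sum_sub_distrib]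
        refine (Finset.abs_sum_le_sum_abs _ _).trans_eq (Finset.sum_congr rfl fun x _ => ?_)
        rw [← sub_mul, abs_mul, apply_ite abs, abs_one, abs_zero]
    _ = ∑ x, |p x - q x| * (if F x ∈ s then 1 else 0) := by
        rw [Finset.sum_comm]
        simp only [← Finset.mul_sum, Finset.sum_ite_eq]
    _ ≤ ∑ x, |p x - q x| :=
        Finset.sum_le_sum fun x _ => mul_le_of_le_one_right (abs_nonneg _) (by split_ifs <;> simp)

lemma eventually_dTVNat_sub_le_dTV {I : Type*} {l : Filter I} {Ω : I → Type*}
    [∀ i, Fintype (Ω i)] {p q : ∀ i, Ω i → ℝ} {F : ∀ i, Ω i → ℕ} {u v : ℕ → ℝ}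
    (hu : Summable u) (hv : Summable v)
    (hp : ∀ j, Tendsto (fun i => pushMass (p i) (F i) j) l (𝓝 (u j)))
    (hq : ∀ j, Tendsto (fun i => pushMass (q i) (F i) j) l (𝓝 (v j))) {ε : ℝ} (hε : 0 < ε) :
    ∀ᶠ i in l, dTVNat u v - ε ≤ dTV (p i) (q i) := by
  have hpartial : Tendsto (fun K => (∑ j ∈ Finset.range K, |u j - v j|) / 2) atTop
      (𝓝 (dTVNat u v)) := (hu.sub hv).abs.hasSum.tendsto_sum_nat.div_const 2
  obtain ⟨K, hK⟩ := (hpartial.eventually_const_lt (sub_lt_self _ hε)).exists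
  have hlim : Tendsto (fun i => (∑ j ∈ Finset.range K,
      |pushMass (p i) (F i) j - pushMass (q i) (F i) j|) / 2) l
      (𝓝 ((∑ j ∈ Finset.range K, |u j - v j|) / 2)) :=
    (tendsto_finsetSum _ fun j _ => ((hp j).sub (hq j)).abs).div_const 2
  filter_upwards [hlim.eventually_const_lt hK] with i hi
  exact hi.le.trans (sum_abs_pushMass_sub_le_dTV (p i) (q i) (F i) _)

lemma dTVNat_comm (u v : ℕ → ℝ) : dTVNat u v = dTVNat v u := by
  simp only [dTVNat, abs_sub_comm]

end TotalVariation

section FixedPointMoments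

lemma factorialMoment_unif {N k : ℕ} (hk : k ≤ N) : factorialMoment (unif N) fixCount k = 1 := by
  have hcard : Fintype.card (Fin N) = N := Fintype.card_fin N
  simp only [factorialMoment, unif]
  rw [← Finset.mul_sum, ← Nat.cast_sum, sum_descFactorial_fixCount (hk.trans hcard.ge), hcard]
  exact inv_mul_cancel₀ (Nat.cast_ne_zero.2 N.factorial_ne_zero)

lemma factorialMoment_transMat_pow (a b : ℝ) {N : ℕ} (A : Finset (Fin N)) (t k : ℕ) :
    factorialMoment ((transMat a b A ^ t) 1) fixCount k =
      (walkMat (swapLaw (blockLaw a b A)) (Fin k ↪ Fin N) ^ t).trace := by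
  rw [trace_walkMat_pow_embedding, Fintype.card_fin, transMat_eq_walkMat]
  rfl

variable {V : Type*} [Fintype V] [DecidableEq V] {A : Finset V} {a b : ℝ}

lemma blockLaw_nonneg (ha : 0 ≤ a) (hb : 0 ≤ b) (i : V) : 0 ≤ blockLaw a b A i := by
  rw [blockLaw]
  split_ifs <;> positivity

lemma blockLaw_le (hba : b ≤ a) (i : V) : blockLaw a b A i ≤ a / Fintype.card V := by
  rw [blockLaw]
  split_ifs <;> gcongr

lemma modeRate_le (ha : 0 ≤ a) (hba : b ≤ a) (hab : a + b = 2) (α : Mode) :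
    modeRate a b α ≤ 2 * a := by
  cases α <;> rw [modeRate] <;> nlinarith

lemma trace_prodKernel_add_smul_one_pow [Nonempty V] (hA : Fintype.card V = 2 * A.card)
    (hab : a + b = 2) (k t : ℕ) (δ : ℝ) :
    ((prodKernel (Fin k) (blockLaw a b A) + δ • 1) ^ t).trace =
      modeSum a b k t (Fintype.card V) δ := by
  rw [((modeResolution hA hab).prodKernel (ι := Fin k) |>.addSmulOne δ).trace_pow]
  simp only [SpectralResolution.addSmulOne_eig, SpectralResolution.addSmulOne_proj,
    SpectralResolution.prodKernel_eig, SpectralResolution.prodKernel_proj, trace_piKronecker,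
    modeResolution_eig, modeResolution_proj, trace_modeProj hA, modeSum]

end FixedPointMoments

section Moments

variable {N : ℕ} [NeZero N] {A : Finset (Fin N)} {a b : ℝ} {k : ℕ}

lemma factorialMoment_transMat_pow_le (hb : 0 ≤ b) (hba : b ≤ a) (hab : a + b = 2)
    (hA : N = 2 * A.card) (hsmall : 4 * (a / N) * k ≤ 1) (t : ℕ) :
    factorialMoment ((transMat a b A ^ t) 1) fixCount k ≤
      modeSum a b k t N (2 * (a * k) ^ 2 / N ^ 2) := by
  have hcard : Fintype.card (Fin N) = 2 * A.card := by rwa [Fintype.card_fin]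
  have hsum : ∑ i, blockLaw a b A i = 1 := by rw [sum_blockLaw hcard, hab, div_self two_ne_zero]
  have hδ : 2 * (a / N * k) ^ 2 = 2 * (a * k) ^ 2 / N ^ 2 := by ring
  have htrace := trace_walkMat_swapLaw_pow_le (ι := Fin k) (blockLaw_nonneg (hb.trans hba) hb)
    (blockLaw_le hba) hsum (by simpa only [Fintype.card_fin] using hsmall) t
  rw [trace_prodKernel_add_smul_one_pow hcard hab, Fintype.card_fin, Fintype.card_fin, hδ] at htrace
  rwa [factorialMoment_transMat_pow]

/-- A bound for the proportion of the trace that is lost when the diagonal is restricted to the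
`k`-tuples of distinct cards. -/
def repeatLoss (a : ℝ) (k N t : ℕ) : ℝ :=
  repeatCount (Fin k) (Fin N) * (2 / N) ^ k * (1 + 4 * (a / N) * k * t)

lemma le_factorialMoment_transMat_pow (hb : 0 ≤ b) (hba : b ≤ a) (hab : a + b = 2)
    (hA : N = 2 * A.card) (hsmall : 4 * (a / N) * k ≤ 1) (t : ℕ) :
    (1 - repeatLoss a k N t) * modeSum a b k t N 0 ≤
      factorialMoment ((transMat a b A ^ t) 1) fixCount k := by
  have hcard : Fintype.card (Fin N) = 2 * A.card := by rwa [Fintype.card_fin]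
  have hsum : ∑ i, blockLaw a b A i = 1 := by rw [sum_blockLaw hcard, hab, div_self two_ne_zero]
  have heig (α : Mode) : modeRate a b α / N ≤ 2 * (a / N) := by
    rw [← mul_div_assoc]
    exact div_le_div_of_nonneg_right (modeRate_le (hb.trans hba) hba hab α) (Nat.cast_nonneg N)
  have htrace := le_trace_walkMat_swapLaw_pow (ι := Fin k) (modeResolution hcard hab)
    (blockLaw_nonneg (hb.trans hba) hb) (blockLaw_le hba) hsum (modeProj_apply_self_nonneg A)
    (modeProj_apply_self_le hcard) (by simpa only [modeResolution_eig, Fintype.card_fin] using heig)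
    (by simpa only [Fintype.card_fin] using hsmall) (by positivity) t
  have htrace_eq := trace_prodKernel_add_smul_one_pow hcard hab k t 0
  rw [zero_smul, add_zero] at htrace_eq
  rw [htrace_eq, Fintype.card_fin, Fintype.card_fin] at htrace
  rwa [factorialMoment_transMat_pow]

end Moments

section MomentLimit

variable {a b : ℝ}

lemma repeatCount_mul_pow_le (k : ℕ) {N : ℕ} (hN : 0 < N) :
    repeatCount (Fin k) (Fin N) * (2 / N : ℝ) ^ k ≤ 2 ^ k * k ^ 2 / N := by
  have hcount : (repeatCount (Fin k) (Fin N) * N : ℝ) ≤ k ^ 2 * N ^ k := by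
    exact_mod_cast Fintype.card_fin N ▸ Fintype.card_fin k ▸ repeatCount_mul_card_le (Fin k) (Fin N)
  rw [div_pow, mul_div_assoc', div_le_div_iff₀ (by positivity) (by positivity)]
  linear_combination 2 ^ k * hcount

lemma tendsto_repeatLoss (ha : 0 ≤ a) (hb : 0 < b) (c : ℝ) (k : ℕ) :
    Tendsto (fun N : ℕ => repeatLoss a k N (stepCount b c N)) atTop (𝓝 0) := by
  have hinv : Tendsto (fun N : ℕ => (N : ℝ)⁻¹) atTop (𝓝 0) := tendsto_inv_atTop_nhds_zero_nat
  have hsq := (tendsto_stepCount_div_sq hb c).comp tendsto_natCast_atTop_atTop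
  have hlim := (hinv.const_mul ((2 : ℝ) ^ k * k ^ 2)).add
    (hsq.const_mul ((2 : ℝ) ^ k * k ^ 2 * (4 * a * k)))
  simp only [mul_zero, add_zero] at hlim
  refine squeeze_zero' (.of_forall fun N => by rw [repeatLoss]; positivity) ?_ hlim
  filter_upwards [eventually_gt_atTop 0] with N hN
  calc repeatLoss a k N (stepCount b c N)
      ≤ 2 ^ k * k ^ 2 / N * (1 + 4 * (a / N) * k * stepCount b c N) :=
        mul_le_mul_of_nonneg_right (repeatCount_mul_pow_le k hN) (by positivity)
    _ = 2 ^ k * k ^ 2 * (N : ℝ)⁻¹ +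
        2 ^ k * k ^ 2 * (4 * a * k) * (stepCount b c N / (N : ℝ) ^ 2) := by ring

/-- The sets of `n` cards among `2 * n`, for all `n` together. -/
abbrev HalfDeck : Type := Σ n : ℕ, {A : Finset (Fin (2 * n)) // A.card = n}

/-- Convergence along this filter is convergence as `n → ∞`, uniformly in the set of cards. -/
def largeDeck : Filter HalfDeck := comap Sigma.fst atTop

/-- The law of the shuffle started from the identity after `stepCount b c (2 * n)` steps. -/
def shuffleLaw (a b c : ℝ) (D : HalfDeck) (y : Equiv.Perm (Fin (2 * D.1))) : ℝ :=
  (transMat a b D.2.1 ^ stepCount b c (2 * D.1)) 1 y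

lemma shuffleLaw_eq (a b c : ℝ) (D : HalfDeck) :
    shuffleLaw a b c D = (transMat a b D.2.1 ^ stepCount b c (2 * D.1 : ℕ)) 1 := by
  rw [Nat.cast_mul, Nat.cast_ofNat]
  rfl

lemma tendsto_deckSize_largeDeck : Tendsto (fun D : HalfDeck => 2 * D.1) largeDeck atTop :=
  (tendsto_id.const_mul_atTop' two_pos).comp tendsto_comap

lemma transMat_pow_apply_nonneg (ha : 0 ≤ a) (hb : 0 ≤ b) {N : ℕ} (A : Finset (Fin N)) (t : ℕ)
    (x y : Equiv.Perm (Fin N)) : 0 ≤ (transMat a b A ^ t) x y := by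
  rw [transMat_eq_walkMat]
  exact pow_apply_nonneg (walkMat_swapLaw_nonneg (blockLaw_nonneg ha hb)) t x y

lemma shuffleLaw_nonneg (ha : 0 ≤ a) (hb : 0 ≤ b) (c : ℝ) (D : HalfDeck)
    (y : Equiv.Perm (Fin (2 * D.1))) : 0 ≤ shuffleLaw a b c D y :=
  transMat_pow_apply_nonneg ha hb D.2.1 _ 1 y

lemma unif_nonneg (N : ℕ) (x : Equiv.Perm (Fin N)) : 0 ≤ unif N x :=
  inv_nonneg.2 (Nat.cast_nonneg _)

lemma tendsto_factorialMoment_unif (k : ℕ) :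
    Tendsto (fun D : HalfDeck => factorialMoment (unif (2 * D.1)) fixCount k) largeDeck
      (𝓝 1) := by
  refine tendsto_const_nhds.congr' ?_
  filter_upwards [tendsto_deckSize_largeDeck.eventually_ge_atTop k] with D hD
  exact (factorialMoment_unif hD).symm

lemma tendsto_factorialMoment_shuffleLaw (hb : 0 < b) (hba : b < a) (hab : a + b = 2) (c : ℝ)
    (k : ℕ) :
    Tendsto (fun D => factorialMoment (shuffleLaw a b c D) fixCount k) largeDeck
      (𝓝 ((1 + Real.exp c / 2) ^ k)) := by
  have ha : 0 ≤ a := (hb.trans hba).le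
  have hsize := tendsto_deckSize_largeDeck
  have hsizeR := tendsto_natCast_atTop_atTop (R := ℝ).comp hsize
  have hsum (C : ℝ) := (tendsto_modeSum c hb hba k C).comp hsizeR
  have hlower := (((tendsto_repeatLoss ha hb c k).comp hsize).const_sub 1).mul (hsum 0)
  rw [sub_zero, one_mul] at hlower
  have hsmall : ∀ᶠ D in largeDeck, 4 * (a / ((2 * D.1 : ℕ) : ℝ)) * k ≤ 1 := by
    filter_upwards [hsizeR.eventually_ge_atTop (4 * a * k), hsizeR.eventually_gt_atTop 0]
      with D hD hpos
    rw [mul_div_assoc', div_mul_eq_mul_div]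
    exact (div_le_one hpos).2 hD
  have hhalf (D : HalfDeck) : 2 * D.1 = 2 * D.2.1.card := by rw [D.2.2]
  refine tendsto_of_tendsto_of_tendsto_of_le_of_le' hlower (hsum (2 * (a * k) ^ 2)) ?_ ?_
  · filter_upwards [hsmall, hsize.eventually_gt_atTop 0] with D hD hpos
    have : NeZero (2 * D.1) := ⟨hpos.ne'⟩
    rw [shuffleLaw_eq]
    simpa only [Function.comp_apply, zero_div] using
      le_factorialMoment_transMat_pow hb.le hba.le hab (hhalf D) hD _
  · filter_upwards [hsmall, hsize.eventually_gt_atTop 0] with D hD hpos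
    have : NeZero (2 * D.1) := ⟨hpos.ne'⟩
    rw [shuffleLaw_eq]
    exact factorialMoment_transMat_pow_le hb.le hba.le hab (hhalf D) hD _

end MomentLimit

/-- Suppose `b < a`. For every `c ∈ ℝ`, with
`t_N = ⌊(N/(2b))(log N − c)⌋` and `N = 2n`,
`liminf_{N→∞} d_TV(U, P^{t_N}(id,·)) ≥ d_TV(Poisson(1 + e^c/2), Poisson(1))`. -/
theorem brt_lower_bound_poisson (a b : ℝ) (hb : 0 < b) (hba : b < a) (hab : a + b = 2)
    (c : ℝ) :
    ∀ ε : ℝ, 0 < ε → ∃ n0 : ℕ, ∀ n : ℕ, n0 ≤ n →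
      ∀ A : Finset (Fin (2 * n)), A.card = n →
        dTVNat (poissonPMF (1 + Real.exp c / 2)) (poissonPMF 1) - ε ≤
          dTV (unif (2 * n))
            (fun y => (transMat a b A ^
              ⌊((2 * n : ℝ) / (2 * b)) * (Real.log (2 * n) - c)⌋₊) 1 y) := by
  intro ε hε
  have hunif := tendsto_pushMass_of_tendsto_factorialMoment
    (fun D : HalfDeck => unif_nonneg (2 * D.1)) (m := 1) fun k => by
      simpa only [one_pow] using tendsto_factorialMoment_unif k
  have hshuffle := tendsto_pushMass_of_tendsto_factorialMoment
    (shuffleLaw_nonneg (hb.trans hba).le hb.le c)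
    (tendsto_factorialMoment_shuffleLaw hb hba hab c)
  have hclose := eventually_dTVNat_sub_le_dTV (summable_poissonPMF 1) (summable_poissonPMF _)
    hunif hshuffle hε
  rw [largeDeck, eventually_comap, eventually_atTop] at hclose
  obtain ⟨n₀, hn₀⟩ := hclose
  rw [dTVNat_comm]
  exact ⟨n₀, fun n hn A hA => hn₀ n hn ⟨n, A, hA⟩ rfl⟩

end BRT
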